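/- arXiv:1012.5329 — 3 statements merged into one kernel-verified Lean document; each statement's English description precedes it below -/
import Mathlib

section
/- Let C be a clutter with edge ideal I(C) ⊂ R = K[x_1,...,x_n], let I_c(C) be its ideal of vertex covers, and let α_0'(C) be the cardinality of a largest minimal vertex cover of C. Then reg(R/I_c(C)) ≥ α_0'(C) - 1, and equality holds if R/I(C) is sequentially Cohen-Macaulay. -/
open MvPolynomial

/-- A clutter on the vertex set `Fin n`: a family of edges, none containing another. -/
structure Clutter (n : ℕ) : Type where
  edges : Finset (Finset (Fin n))
  antichain : ∀ e ∈ edges, ∀ f ∈ edges, e ⊆ f → e = f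

/-- The squarefree monomial `∏_{i ∈ e} xᵢ` associated to a set of vertices. -/
noncomputable def edgeMonomial (K : Type) [Field K] {n : ℕ} (e : Finset (Fin n)) :
    MvPolynomial (Fin n) K :=
  ∏ i ∈ e, X i

/-- The edge ideal of a clutter. -/
noncomputable def Clutter.edgeIdeal (K : Type) [Field K] {n : ℕ} (C : Clutter n) :
    Ideal (MvPolynomial (Fin n) K) :=
  Ideal.span (edgeMonomial K '' ↑C.edges)

/-- A vertex cover of a clutter: a set of vertices meeting every edge. -/
def Clutter.IsVertexCover {n : ℕ} (C : Clutter n) (S : Finset (Fin n)) : Prop :=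
  ∀ e ∈ C.edges, ∃ i ∈ e, i ∈ S

/-- The ideal of vertex covers (Alexander dual) of a clutter. -/
noncomputable def Clutter.coverIdeal (K : Type) [Field K] {n : ℕ} (C : Clutter n) :
    Ideal (MvPolynomial (Fin n) K) :=
  Ideal.span (edgeMonomial K '' {S : Finset (Fin n) | C.IsVertexCover S})

/-- A minimal vertex cover of a clutter. -/
def Clutter.IsMinCover {n : ℕ} (C : Clutter n) (S : Finset (Fin n)) : Prop :=
  C.IsVertexCover S ∧ ∀ T : Finset (Fin n), C.IsVertexCover T → T ⊆ S → T = S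

/-- `α₀'(C)`: the maximum cardinality of a minimal vertex cover of `C`. -/
noncomputable def alpha0' {n : ℕ} (C : Clutter n) : ℕ :=
  sSup { k : ℕ | ∃ S : Finset (Fin n), C.IsMinCover S ∧ S.card = k }

/-- A finite graded free resolution of `R/I`, where `R = K[x₁,…,xₙ]`.
`F_i = ⊕_j R(-tw i j)` with `rk i` summands, differentials `δ i : F_{i+1} → F_i`
given by matrices with homogeneous entries of the correct degrees, exact, and
augmented by a degree-preserving surjection `F₀ → R/I`. -/
structure GFR (n : ℕ) (K : Type) [Field K] (I : Ideal (MvPolynomial (Fin n) K)) : Type where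
  len : ℕ
  rk : ℕ → ℕ
  rk_zero : ∀ i, len < i → rk i = 0
  tw : (i : ℕ) → Fin (rk i) → ℕ
  δ : (i : ℕ) → ((Fin (rk (i + 1)) → MvPolynomial (Fin n) K) →ₗ[MvPolynomial (Fin n) K]
        (Fin (rk i) → MvPolynomial (Fin n) K))
  δ_homog : ∀ (i : ℕ) (k : Fin (rk (i + 1))) (j : Fin (rk i)),
      δ i (Pi.single k 1) j = 0 ∨
        (tw i j ≤ tw (i + 1) k ∧ (δ i (Pi.single k 1) j).IsHomogeneous (tw (i + 1) k - tw i j))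
  aug : (Fin (rk 0) → MvPolynomial (Fin n) K) →ₗ[MvPolynomial (Fin n) K] MvPolynomial (Fin n) K
  aug_homog : ∀ j : Fin (rk 0), (aug (Pi.single j 1)).IsHomogeneous (tw 0 j)
  aug_surj : ∀ r : MvPolynomial (Fin n) K, ∃ x, r - aug x ∈ I
  exact_zero : LinearMap.range (δ 0) = Submodule.comap aug I
  exact_succ : ∀ i : ℕ, LinearMap.range (δ (i + 1)) = LinearMap.ker (δ i)

/-- The Castelnuovo–Mumford regularity of `R/I`:
the least `r` such that `R/I` admits a (finite) graded free resolution all of whose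
`i`-th twists are at most `r + i`.  (This value is attained by the minimal graded free
resolution, so it equals `max { j - i : b_{ij}(R/I) ≠ 0 }`.) -/
noncomputable def regR {n : ℕ} {K : Type} [Field K] (I : Ideal (MvPolynomial (Fin n) K)) : ℕ :=
  sInf { r : ℕ | ∃ F : GFR n K I, ∀ (i : ℕ) (j : Fin (F.rk i)), F.tw i j ≤ r + i }

/-- The maximal graded ideal `m = (x₁,…,xₙ)` of `K[x₁,…,xₙ]`. -/
noncomputable def maxIdeal (n : ℕ) (K : Type) [Field K] : Ideal (MvPolynomial (Fin n) K) :=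
  Ideal.span (Set.range (X : Fin n → MvPolynomial (Fin n) K))

/-- The depth of a module `M` over `R = K[x₁,…,xₙ]` with respect to the maximal graded
ideal `m`: the largest length of an `M`-regular sequence contained in `m`. -/
noncomputable def depthR (n : ℕ) (K : Type) [Field K] (M : Type)
    [AddCommGroup M] [Module (MvPolynomial (Fin n) K) M] : ℕ :=
  sSup { k : ℕ | ∃ rs : List (MvPolynomial (Fin n) K), rs.length = k ∧
    (∀ r ∈ rs, r ∈ maxIdeal n K) ∧ RingTheory.Sequence.IsRegular M rs }

/-- The (Krull) dimension of a module `M` over `R = K[x₁,…,xₙ]`: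
the Krull dimension of `R/ann(M)`. -/
noncomputable def dimR (n : ℕ) (K : Type) [Field K] (M : Type)
    [AddCommGroup M] [Module (MvPolynomial (Fin n) K) M] : WithBot (WithTop ℕ) :=
  ringKrullDim (MvPolynomial (Fin n) K ⧸ Module.annihilator (MvPolynomial (Fin n) K) M)

/-- A module over `R = K[x₁,…,xₙ]` is Cohen–Macaulay if it is zero or
its depth equals its Krull dimension. -/
def IsCMmod (n : ℕ) (K : Type) [Field K] (M : Type)
    [AddCommGroup M] [Module (MvPolynomial (Fin n) K) M] : Prop :=
  Subsingleton M ∨ (((depthR n K M : ℕ) : WithTop ℕ) : WithBot (WithTop ℕ)) = dimR n K M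

/-- The subquotient `B/A` of a module, for submodules `A ≤ B`. -/
abbrev subQuot {R M : Type} [CommRing R] [AddCommGroup M] [Module R M]
    (A B : Submodule R M) : Type :=
  ↥B ⧸ Submodule.comap B.subtype A

/-- A submodule `W` of `R/I` is graded (homogeneous) if it is stable under taking
homogeneous components of representatives. -/
def IsGradedSub {n : ℕ} {K : Type} [Field K] (I : Ideal (MvPolynomial (Fin n) K))
    (W : Submodule (MvPolynomial (Fin n) K) (MvPolynomial (Fin n) K ⧸ I)) : Prop :=
  ∀ p : MvPolynomial (Fin n) K, Ideal.Quotient.mk I p ∈ W →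
    ∀ d : ℕ, Ideal.Quotient.mk I (homogeneousComponent d p) ∈ W

/-- `R/I` is sequentially Cohen–Macaulay: there is a finite filtration
`0 = M₀ ⊆ M₁ ⊆ ⋯ ⊆ M_r = R/I` by graded submodules whose successive quotients are
Cohen–Macaulay with strictly increasing Krull dimensions. -/
def IsSeqCM {n : ℕ} (K : Type) [Field K] (I : Ideal (MvPolynomial (Fin n) K)) : Prop :=
  ∃ (r : ℕ) (Mf : Fin (r + 1) → Submodule (MvPolynomial (Fin n) K)
      (MvPolynomial (Fin n) K ⧸ I)),
    Mf 0 = ⊥ ∧ Mf (Fin.last r) = ⊤ ∧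
    (∀ i : Fin r, Mf i.castSucc ≤ Mf i.succ) ∧
    (∀ i : Fin (r + 1), IsGradedSub I (Mf i)) ∧
    (∀ i : Fin r, IsCMmod n K (subQuot (Mf i.castSucc) (Mf i.succ))) ∧
    (∀ i j : Fin r, i < j →
      dimR n K (subQuot (Mf i.castSucc) (Mf i.succ)) <
        dimR n K (subQuot (Mf j.castSucc) (Mf j.succ)))

/-!
If the first twists of a graded free resolution of `R/I_c(C)` are at most `d`, then for every
`f ∈ I_c(C)` the product of `f` with a lift of `1` lies in the ideal generated by the elements of
`I_c(C)` of degree at most `d`. For `f` the monomial of a minimal cover `S`, no proper divisor of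
which lies in `I_c(C)`, this forces `#S ≤ d`.

Conversely, every nonzero element of `R/I(C)` survives modulo the prime of some minimal cover, so
the factors of a sequentially Cohen–Macaulay filtration have dimension, hence depth, at least
`n - α₀'(C)`. Therefore the Koszul cohomology of `R/I(C)` on the squares `xᵢ²` vanishes in
cohomological degrees below `n - α₀'(C)`. Its multigraded strands compute the cohomology of links in
the complex of stable sets, while the strands of the Koszul homology of `I_c(C)` on the variables
compute the homology of the same links; by duality the latter vanishes in internal degrees above
`α₀'(C)`. A graded module with this vanishing is generated in degrees at most `α₀'(C)`, and the
long exact sequence of Koszul homology shows that the syzygies of irredundant generators satisfy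
the same vanishing with the bound raised by one; iterating yields the resolution.
-/

namespace Koszul

/-! ### Koszul complexes -/

section Sign

variable {σ : Type*} [LinearOrder σ]

/-- The sign of moving `eᵢ` past the `eⱼ` with `j ∈ T`, `j < i`, so that `eᵢ ∧ e_T` is
`sign i T • e_{insert i T}` when `i ∉ T`. -/
def sign (i : σ) (T : Finset σ) : ℤ := (-1) ^ (T.filter (· < i)).card

lemma sign_mul_self (i : σ) (T : Finset σ) : sign i T * sign i T = 1 := by
  rw [sign, ← mul_pow, neg_one_mul, neg_neg, one_pow]

lemma sign_insert {i j : σ} {T : Finset σ} (hj : j ∉ T) :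
    sign i (insert j T) = if j < i then -sign i T else sign i T := by
  split_ifs with h
  · rw [sign, Finset.filter_insert, if_pos h, Finset.card_insert_of_notMem (by simp [hj]),
      pow_succ, mul_neg_one, sign]
  · rw [sign, Finset.filter_insert, if_neg h, sign]

lemma sign_erase {i j : σ} {T : Finset σ} (hj : j ∈ T) :
    sign i (T.erase j) = if j < i then -sign i T else sign i T := by
  have h := sign_insert (i := i) (Finset.notMem_erase j T)
  rw [Finset.insert_erase hj] at h
  split_ifs at h ⊢ <;> simp [h]

lemma sign_union (i : σ) {A B : Finset σ} (h : Disjoint A B) :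
    sign i (A ∪ B) = sign i A * sign i B := by
  rw [sign, Finset.filter_union, Finset.card_union_of_disjoint
    (Finset.disjoint_filter_filter h), pow_add, sign, sign]

end Sign

variable {σ R M N : Type*} [LinearOrder σ] [CommRing R] [AddCommGroup M] [Module R M]
  [AddCommGroup N] [Module R N]

variable (R) in
/-- Exterior multiplication by the basis vector `eᵢ`, on elements `∑_T f T ⊗ e_T` of
`M ⊗ ⋀ R^σ` encoded by their coefficients `f : Finset σ → M`. -/
def wedge (i : σ) : (Finset σ → M) →ₗ[R] (Finset σ → M) where
  toFun f T := if i ∈ T then sign i T • f (T.erase i) else 0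
  map_add' f g := by ext T; by_cases i ∈ T <;> simp [*]
  map_smul' r f := by ext T; by_cases i ∈ T <;> simp [*, smul_comm r]

variable (R) in
/-- Contraction with the `i`-th coordinate form, on the same encoding as `wedge`. -/
def contract (i : σ) : (Finset σ → M) →ₗ[R] (Finset σ → M) where
  toFun f T := if i ∈ T then 0 else sign i T • f (insert i T)
  map_add' f g := by ext T; by_cases i ∈ T <;> simp [*]
  map_smul' r f := by ext T; by_cases i ∈ T <;> simp [*, smul_comm r]

lemma wedge_apply (i : σ) (f : Finset σ → M) (T : Finset σ) :
    wedge R i f T = if i ∈ T then sign i T • f (T.erase i) else 0 := rfl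

lemma contract_apply (i : σ) (f : Finset σ → M) (T : Finset σ) :
    contract R i f T = if i ∈ T then 0 else sign i T • f (insert i T) := rfl

lemma wedge_wedge_anticomm (i j : σ) (f : Finset σ → M) :
    wedge R i (wedge R j f) = -wedge R j (wedge R i f) := by
  ext T
  rcases eq_or_ne i j with rfl | hij
  · simp [wedge_apply]
  by_cases hi : i ∈ T <;> by_cases hj : j ∈ T <;>
    simp only [wedge_apply, Pi.neg_apply, Finset.mem_erase, hi, hj, hij, hij.symm, ne_eq,
      not_false_eq_true, and_self, and_false, if_true, if_false, smul_zero, neg_zero]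
  rw [sign_erase hi, sign_erase hj, smul_smul, smul_smul, ← neg_smul, Finset.erase_right_comm]
  rcases hij.lt_or_gt with h | h <;> simp [h, h.not_gt, mul_comm]

lemma contract_contract_anticomm (i j : σ) (f : Finset σ → M) :
    contract R i (contract R j f) = -contract R j (contract R i f) := by
  ext T
  rcases eq_or_ne i j with rfl | hij
  · simp [contract_apply]
  by_cases hi : i ∈ T <;> by_cases hj : j ∈ T <;>
    simp only [contract_apply, Pi.neg_apply, Finset.mem_insert, hi, hj, hij, hij.symm, or_true,
      or_self, if_true, if_false, smul_zero, neg_zero]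
  rw [sign_insert hi, sign_insert hj, smul_smul, smul_smul, ← neg_smul, Finset.insert_comm]
  rcases hij.lt_or_gt with h | h <;> simp [h, h.not_gt, mul_comm]

lemma contract_wedge_add (i j : σ) (f : Finset σ → M) :
    contract R i (wedge R j f) + wedge R j (contract R i f) = if i = j then f else 0 := by
  ext T
  rcases eq_or_ne i j with rfl | hij
  · by_cases hi : i ∈ T
    · simp [contract_apply, wedge_apply, hi, sign_erase, smul_smul, sign_mul_self]
    · simp [contract_apply, wedge_apply, hi, sign_insert, smul_smul, sign_mul_self]
  by_cases hi : i ∈ T <;> by_cases hj : j ∈ T <;>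
    simp only [contract_apply, wedge_apply, Pi.add_apply, Finset.mem_insert, Finset.mem_erase,
      hi, hj, hij, hij.symm, ne_eq, not_false_eq_true, or_true, or_self, and_self, and_false,
      if_true, if_false, smul_zero, add_zero, Pi.zero_apply]
  rw [sign_insert hi, sign_erase hj, smul_smul, smul_smul, Finset.erase_insert_of_ne hij,
    ← add_smul]
  rcases hij.lt_or_gt with h | h <;> simp [h, h.not_gt, mul_comm]

variable [Fintype σ]

/-- Exterior multiplication by `∑ aᵢ eᵢ`: the differential of the Koszul cochain complex of the
family `a` with coefficients in `M`. -/
def coboundary (a : σ → R) : (Finset σ → M) →ₗ[R] (Finset σ → M) :=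
  ∑ i, a i • wedge R i

/-- Contraction with the form `∑ aᵢ eᵢ*`: the differential of the Koszul chain complex of the
family `a` with coefficients in `M`. -/
def boundary (a : σ → R) : (Finset σ → M) →ₗ[R] (Finset σ → M) :=
  ∑ i, a i • contract R i

lemma coboundary_eq_sum (a : σ → R) (f : Finset σ → M) :
    coboundary a f = ∑ i, a i • wedge R i f := by
  simp [coboundary]

lemma boundary_eq_sum (a : σ → R) (f : Finset σ → M) :
    boundary a f = ∑ i, a i • contract R i f := by
  simp [boundary]

lemma coboundary_apply (a : σ → R) (f : Finset σ → M) (T : Finset σ) :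
    coboundary a f T = ∑ i ∈ T, a i • sign i T • f (T.erase i) := by
  simp [coboundary_eq_sum, wedge_apply, Finset.sum_ite_mem]

lemma boundary_apply (a : σ → R) (f : Finset σ → M) (T : Finset σ) :
    boundary a f T = ∑ i ∈ Tᶜ, a i • sign i T • f (insert i T) := by
  simp only [boundary_eq_sum, contract_apply, Finset.sum_apply, Pi.smul_apply, smul_ite, smul_zero]
  simp only [Finset.sum_ite, Finset.sum_const_zero, zero_add]
  exact Finset.sum_congr (by ext; simp) fun _ _ => rfl

/-- A sum antisymmetric in its two indices cancels in pairs; the diagonal is handled by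
`Finset.sum_involution`, so no division by two is needed. -/
lemma sum_sum_eq_zero_of_antisymm {ι : Type*} [Fintype ι] (u : ι → ι → M)
    (hu : ∀ i j, u i j = -u j i) (hd : ∀ i, u i i = 0) : ∑ i, ∑ j, u i j = 0 := by
  classical
  rw [← Fintype.sum_prod_type']
  refine Finset.sum_involution (fun p _ => p.swap) (fun p _ => ?_) (fun p _ hp hs => hp ?_)
    (fun _ _ => Finset.mem_univ _) (fun p _ => p.swap_swap)
  · rw [hu p.1 p.2]
    exact neg_add_cancel _
  · obtain ⟨i, j⟩ := p
    obtain rfl : j = i := congrArg Prod.fst hs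
    exact hd j

lemma coboundary_coboundary (a : σ → R) (f : Finset σ → M) :
    coboundary a (coboundary a f) = 0 := by
  simp only [coboundary_eq_sum, map_sum, map_smul, Finset.smul_sum]
  refine sum_sum_eq_zero_of_antisymm _ (fun i j => ?_) (fun i => ?_)
  · rw [wedge_wedge_anticomm, smul_neg, smul_neg, smul_comm]
  · ext T
    simp [wedge_apply]

lemma boundary_boundary (a : σ → R) (f : Finset σ → M) :
    boundary a (boundary a f) = 0 := by
  simp only [boundary_eq_sum, map_sum, map_smul, Finset.smul_sum]
  refine sum_sum_eq_zero_of_antisymm _ (fun i j => ?_) (fun i => ?_)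
  · rw [contract_contract_anticomm, smul_neg, smul_neg, smul_comm]
  · ext T
    simp [contract_apply]

lemma boundary_wedge_add (b : σ → R) (v : σ) (f : Finset σ → M) :
    boundary b (wedge R v f) + wedge R v (boundary b f) = b v • f := by
  simp only [boundary_eq_sum, map_sum, map_smul, ← Finset.sum_add_distrib, ← smul_add,
    contract_wedge_add]
  simp

lemma coboundary_boundary_add (a b : σ → R) (f : Finset σ → M) :
    coboundary a (boundary b f) + boundary b (coboundary a f) = (∑ i, a i * b i) • f := by
  simp only [coboundary_eq_sum, map_sum, map_smul, ← Finset.sum_add_distrib, ← smul_add,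
    Finset.sum_smul, mul_smul]
  exact Finset.sum_congr rfl fun i _ => by rw [add_comm, boundary_wedge_add]

lemma coboundary_comp (a : σ → R) (φ : M →ₗ[R] N) (f : Finset σ → M) :
    coboundary a (φ ∘ f) = φ ∘ coboundary a f := by
  ext T
  simp [coboundary_apply]

lemma boundary_comp (a : σ → R) (φ : M →ₗ[R] N) (f : Finset σ → M) :
    boundary a (φ ∘ f) = φ ∘ boundary a f := by
  ext T
  simp [boundary_apply]

lemma dotProduct_wedge (i : σ) (f g : Finset σ → R) :
    f ⬝ᵥ wedge R i g = contract R i f ⬝ᵥ g := by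
  simp only [dotProduct, wedge_apply, contract_apply, mul_ite, ite_mul, mul_zero, zero_mul,
    ← Finset.sum_filter, Finset.sum_ite, Finset.sum_const_zero, zero_add]
  refine Finset.sum_bij' (fun T _ => T.erase i) (fun T _ => insert i T)
    (by simp) (by simp) (by simp +contextual) (by simp +contextual) fun T hT => ?_
  have hi : i ∈ T := by simpa using hT
  simp [sign_erase hi, Finset.insert_erase hi, mul_assoc, mul_left_comm]

lemma dotProduct_coboundary (a : σ → R) (f g : Finset σ → R) :
    f ⬝ᵥ coboundary a g = boundary a f ⬝ᵥ g := by
  simp only [coboundary_eq_sum, boundary_eq_sum, dotProduct_sum, sum_dotProduct, dotProduct_smul,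
    smul_dotProduct, dotProduct_wedge]

end Koszul

namespace Koszul

/-! ### Vanishing of Koszul cohomology -/

variable {σ R M : Type*} [LinearOrder σ] [Fintype σ] [CommRing R] [AddCommGroup M] [Module R M]

/-- The vanishing of the Koszul cohomology of the family `a` with coefficients in `M` in all
degrees `< k`; for finite `M` over a Noetherian ring this says that the ideal generated by `a`
has grade at least `k` on `M`. -/
def ExactBelow (a : σ → R) (M : Type*) [AddCommGroup M] [Module R M] (k : ℕ) : Prop :=
  ∀ f : Finset σ → M, (∀ T, k ≤ T.card → f T = 0) → coboundary a f = 0 →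
    ∃ g, coboundary a g = f

lemma exactBelow_zero (a : σ → R) : ExactBelow a M 0 := fun f hf _ =>
  ⟨0, by rw [map_zero]; exact funext fun T => (hf T (Nat.zero_le _)).symm⟩

lemma exactBelow_of_subsingleton [Subsingleton M] (a : σ → R) (k : ℕ) : ExactBelow a M k :=
  fun _ _ _ => ⟨0, Subsingleton.elim _ _⟩

lemma ExactBelow.mono {a : σ → R} {k l : ℕ} (h : ExactBelow a M k) (hl : l ≤ k) :
    ExactBelow a M l := fun f hf hd => h f (fun T hT => hf T (hl.trans hT)) hd

lemma coboundary_apply_eq_zero (a : σ → R) {k : ℕ} {g : Finset σ → M}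
    (hg : ∀ T, k ≤ T.card + 1 → g T = 0) {T : Finset σ} (hT : k ≤ T.card) :
    coboundary a g T = 0 := by
  rw [coboundary_apply]
  refine Finset.sum_eq_zero fun i hi => ?_
  rw [hg _ (by rwa [Finset.card_erase_add_one hi]), smul_zero, smul_zero]

lemma exists_truncated_coboundary_eq (a : σ → R) {k : ℕ} {g : Finset σ → M}
    (hg : ∀ T, k ≤ T.card → coboundary a g T = 0) :
    ∃ g' : Finset σ → M, (∀ T, k ≤ T.card + 1 → g' T = 0) ∧ coboundary a g' = coboundary a g := by
  let g' : Finset σ → M := fun T => if k ≤ T.card + 1 then 0 else g T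
  have hg' : ∀ T, k ≤ T.card + 1 → g' T = 0 := fun T hT => if_pos hT
  refine ⟨g', hg', funext fun T => ?_⟩
  by_cases hT : k ≤ T.card
  · rw [hg T hT, coboundary_apply_eq_zero a hg' hT]
  · simp only [coboundary_apply]
    refine Finset.sum_congr rfl fun i hi => ?_
    have hi' : ¬k ≤ (T.erase i).card + 1 := by rwa [Finset.card_erase_add_one hi]
    rw [show g' (T.erase i) = g (T.erase i) from if_neg hi']

lemma exists_comp_eq_of_surjective {P : Type*} [AddCommGroup P] [Module R P]
    {π : M →ₗ[R] P} (hπ : Function.Surjective π) {ι : Type*} (g : ι → P) :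
    ∃ y : ι → M, π ∘ y = g ∧ ∀ T, g T = 0 → y T = 0 := by
  have h : ∀ T, ∃ y, π y = g T ∧ (g T = 0 → y = 0) := fun T => by
    by_cases hT : g T = 0
    · exact ⟨0, by rw [hT, map_zero], fun _ => rfl⟩
    · exact (hπ (g T)).imp fun y hy => ⟨hy, fun h => absurd h hT⟩
  choose y hy hy0 using h
  exact ⟨y, funext hy, hy0⟩

lemma ExactBelow.of_exact {L P : Type*} [AddCommGroup L] [Module R L] [AddCommGroup P]
    [Module R P] {a : σ → R} {k : ℕ} {ι : L →ₗ[R] M} {π : M →ₗ[R] P}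
    (hι : Function.Injective ι) (hex : Function.Exact ι π) (hπ : Function.Surjective π)
    (hL : ExactBelow a L k) (hP : ExactBelow a P k) : ExactBelow a M k := by
  intro f hf hd
  obtain ⟨g, hg⟩ := hP (π ∘ f) (fun T hT => by simp [hf T hT]) (by
    rw [coboundary_comp, hd]; ext T; simp)
  obtain ⟨g', hg'0, hg'⟩ := exists_truncated_coboundary_eq a (k := k) (g := g)
    (fun T hT => by simp [hg, hf T hT])
  obtain ⟨y, hyg, hy0⟩ := exists_comp_eq_of_surjective hπ g'
  have hker : ∀ T, ∃ x, ι x = (f - coboundary a y) T := fun T =>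
    (hex _).1 <| by
      have := congrFun (coboundary_comp a π y) T
      rw [hyg, hg', hg] at this
      rw [Pi.sub_apply, map_sub, sub_eq_zero]
      exact this
  choose x hx using hker
  have hιx : ι ∘ x = f - coboundary a y := funext hx
  obtain ⟨w, hw⟩ := hL x
    (fun T hT => hι (by
      rw [hx, map_zero, Pi.sub_apply, hf T hT,
        coboundary_apply_eq_zero a (fun U hU => hy0 U (hg'0 U hU)) hT, sub_zero]))
    (funext fun T => hι (by
      have := congrFun (coboundary_comp a ι x) T
      rw [hιx, map_sub, hd, coboundary_coboundary, sub_zero] at this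
      simpa using this.symm))
  exact ⟨y + ι ∘ w, by rw [map_add, coboundary_comp, hw, hιx, add_sub_cancel]⟩

lemma ExactBelow.of_linearEquiv {L : Type*} [AddCommGroup L] [Module R L] {a : σ → R} {k : ℕ}
    (e : L ≃ₗ[R] M) (h : ExactBelow a L k) : ExactBelow a M k :=
  h.of_exact (ι := e.toLinearMap) (π := (0 : M →ₗ[R] PUnit.{1})) e.injective
    ((LinearMap.exact_zero_iff_surjective _ _).2 e.surjective) (fun _ => ⟨0, rfl⟩)
    (exactBelow_of_subsingleton a k)

lemma ExactBelow.of_filtration {R M : Type} [CommRing R] [AddCommGroup M] [Module R M]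
    {a : σ → R} {k r : ℕ} {F : Fin (r + 1) → Submodule R M} (hbot : F 0 = ⊥)
    (htop : F (Fin.last r) = ⊤) (hF : ∀ i : Fin r, F i.castSucc ≤ F i.succ)
    (h : ∀ i : Fin r, ExactBelow a (subQuot (F i.castSucc) (F i.succ)) k) :
    ExactBelow a M k := by
  suffices hall : ∀ i, ExactBelow a (F i) k from
    (hall (Fin.last r)).of_linearEquiv ((LinearEquiv.ofEq _ _ htop).trans Submodule.topEquiv)
  refine Fin.induction ?_ fun i hi => ?_
  · rw [hbot]
    exact exactBelow_of_subsingleton a k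
  · refine ExactBelow.of_exact (ι := Submodule.inclusion (hF i)) (π := Submodule.mkQ _)
      (Submodule.inclusion_injective _) ?_ (Submodule.mkQ_surjective _) hi (h i)
    rw [LinearMap.exact_iff, Submodule.ker_mkQ, Submodule.range_inclusion]

lemma exists_coboundary_eq_smul {a : σ → R} {f : Finset σ → M} (hf : coboundary a f = 0) {r : R}
    (hr : r ∈ Ideal.span (Set.range a)) : ∃ g, coboundary a g = r • f := by
  obtain ⟨b, rfl⟩ := Ideal.mem_span_range_iff_exists_fun.1 hr
  refine ⟨boundary b f, ?_⟩
  have h := coboundary_boundary_add a b f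
  rw [hf, map_zero, add_zero] at h
  simp only [h, mul_comm]

lemma ExactBelow.exists_of_smul {a : σ → R} {k : ℕ} {r : R} (hr : IsSMulRegular M r)
    (h : ExactBelow a (QuotSMulTop r M) k) {f : Finset σ → M}
    (hf : ∀ T, k + 1 ≤ T.card → f T = 0) (hrf : ∃ w, coboundary a w = r • f) :
    ∃ u, coboundary a u = f := by
  obtain ⟨w, hw⟩ := hrf
  obtain ⟨w', hw'0, hw'⟩ := exists_truncated_coboundary_eq a (k := k + 1) (g := w)
    (fun T hT => by simp [hw, hf T hT])
  let π : M →ₗ[R] QuotSMulTop r M := Submodule.mkQ _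
  have hπ0 : ∀ x, π x = 0 ↔ ∃ y, r • y = x := fun x => by
    rw [Submodule.mkQ_apply, Submodule.Quotient.mk_eq_zero,
      Submodule.mem_smul_pointwise_iff_exists]
    simp
  obtain ⟨v, hv⟩ := h (π ∘ w') (fun T hT => by simp [hw'0 T (by lia)]) (by
    rw [coboundary_comp, hw', hw]
    exact funext fun T => (hπ0 _).2 ⟨f T, rfl⟩)
  obtain ⟨y, hy, -⟩ := exists_comp_eq_of_surjective (π := π) (Submodule.mkQ_surjective _) v
  have hdiv : ∀ T, ∃ u, r • u = (w' - coboundary a y) T := fun T =>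
    (hπ0 _).1 (by
      have := congrFun hv T
      rw [← hy, coboundary_comp] at this
      rw [Pi.sub_apply, map_sub, sub_eq_zero]
      exact this.symm)
  choose u hu using hdiv
  have hru : r • u = w' - coboundary a y := funext hu
  refine ⟨u, funext fun T => hr ?_⟩
  have hdu : r • coboundary a u = r • f := by
    rw [← map_smul, hru, map_sub, coboundary_coboundary, sub_zero, hw', hw]
  exact congrFun hdu T

lemma ExactBelow.succ_of_quotSMulTop {a : σ → R} {k : ℕ} {r : R}
    (hra : r ∈ (Ideal.span (Set.range a)).radical) (hr : IsSMulRegular M r)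
    (h : ExactBelow a (QuotSMulTop r M) k) : ExactBelow a M (k + 1) := by
  intro f hf hd
  obtain ⟨N, hN⟩ := hra
  have hdescent : ∀ N, (∃ g, coboundary a g = r ^ N • f) → ∃ g, coboundary a g = f := by
    intro N
    induction N with
    | zero => simp
    | succ N ih =>
      intro hg
      refine ih (h.exists_of_smul hr (fun T hT => by simp [hf T hT]) ?_)
      simpa only [smul_smul, ← pow_succ'] using hg
  exact hdescent N (exists_coboundary_eq_smul hd hN)

lemma exactBelow_length_of_isWeaklyRegular {a : σ → R} {rs : List R}
    (hrs : ∀ r ∈ rs, r ∈ (Ideal.span (Set.range a)).radical)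
    (h : RingTheory.Sequence.IsWeaklyRegular M rs) : ExactBelow a M rs.length := by
  induction rs generalizing M with
  | nil => exact exactBelow_zero a
  | cons r rs ih =>
    rw [RingTheory.Sequence.isWeaklyRegular_cons_iff] at h
    exact (ih (fun s hs => hrs s (List.mem_cons_of_mem r hs)) h.2).succ_of_quotSMulTop
      (hrs r List.mem_cons_self) h.1

end Koszul

/-! ### Squarefree monomial ideals of a clutter -/

section SquarefreeMonomials

variable {σ : Type*}

/-- The exponent vector of the squarefree monomial `∏_{i ∈ S} xᵢ`. -/
noncomputable def squarefreeExponent (S : Finset σ) : σ →₀ ℕ := ∑ i ∈ S, Finsupp.single i 1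

lemma squarefreeExponent_apply [DecidableEq σ] (S : Finset σ) (i : σ) :
    squarefreeExponent S i = if i ∈ S then 1 else 0 := by
  simp [squarefreeExponent, Finsupp.single_apply]

lemma squarefreeExponent_insert [DecidableEq σ] {i : σ} {T : Finset σ} (hi : i ∉ T) :
    squarefreeExponent (insert i T) = squarefreeExponent T + Finsupp.single i 1 := by
  rw [squarefreeExponent, Finset.sum_insert hi, add_comm, squarefreeExponent]

lemma support_squarefreeExponent (S : Finset σ) : (squarefreeExponent S).support = S := by
  classical
  ext i
  simp [squarefreeExponent_apply]

lemma degree_squarefreeExponent (S : Finset σ) : (squarefreeExponent S).degree = S.card := by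
  simp [squarefreeExponent]

lemma squarefreeExponent_sub [DecidableEq σ] (S T : Finset σ) :
    squarefreeExponent S - squarefreeExponent T = squarefreeExponent (S \ T) := by
  ext i
  by_cases hS : i ∈ S <;> by_cases hT : i ∈ T <;> simp [squarefreeExponent_apply, hS, hT]

lemma eq_squarefreeExponent_support {e : σ →₀ ℕ} (h : ∀ i, e i ≤ 1) :
    e = squarefreeExponent e.support := by
  classical
  ext i
  have hi := h i
  rw [squarefreeExponent_apply]
  split_ifs with hsupp
  · exact le_antisymm hi (Nat.one_le_iff_ne_zero.2 (Finsupp.mem_support_iff.1 hsupp))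
  · exact Finsupp.notMem_support_iff.1 hsupp

lemma squarefreeExponent_le_iff {S : Finset σ} {e : σ →₀ ℕ} :
    squarefreeExponent S ≤ e ↔ S ⊆ e.support := by
  classical
  simp only [Finsupp.le_def, squarefreeExponent_apply, Finset.subset_iff, Finsupp.mem_support_iff]
  refine forall_congr' fun i => ?_
  split_ifs with hi
  · simp [hi, Nat.one_le_iff_ne_zero]
  · simp [hi]

variable {K : Type} [Field K] {n : ℕ}

lemma edgeMonomial_eq_monomial (S : Finset (Fin n)) :
    edgeMonomial K S = monomial (squarefreeExponent S) 1 := by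
  rw [edgeMonomial, squarefreeExponent, monomial_sum_one]
  rfl

lemma mem_span_edgeMonomial {A : Set (Finset (Fin n))} {f : MvPolynomial (Fin n) K} :
    f ∈ Ideal.span (edgeMonomial K '' A) ↔ ∀ e ∈ f.support, ∃ S ∈ A, S ⊆ e.support := by
  rw [Set.image_congr fun S _ => edgeMonomial_eq_monomial (K := K) S,
    ← Set.image_image (fun s => monomial s (1 : K)), mem_ideal_span_monomial_image]
  simp [squarefreeExponent_le_iff]

end SquarefreeMonomials

namespace Clutter

variable {K : Type} [Field K] {n : ℕ} {C : Clutter n} {S T : Finset (Fin n)}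

/-- A stable (independent) set of a clutter: a set of vertices containing no edge. -/
def IsStable (C : Clutter n) (S : Finset (Fin n)) : Prop := ∀ e ∈ C.edges, ¬e ⊆ S

lemma IsStable.subset (hT : C.IsStable T) (h : S ⊆ T) : C.IsStable S :=
  fun e he hS => hT e he (hS.trans h)

lemma isVertexCover_iff_isStable_compl : C.IsVertexCover S ↔ C.IsStable Sᶜ := by
  simp [IsVertexCover, IsStable, Finset.subset_iff]

lemma isVertexCover_compl_iff : C.IsVertexCover Sᶜ ↔ C.IsStable S := by
  rw [isVertexCover_iff_isStable_compl, compl_compl]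

lemma IsVertexCover.superset (hS : C.IsVertexCover S) (h : S ⊆ T) : C.IsVertexCover T :=
  fun e he => (hS e he).imp fun _ hi => ⟨hi.1, h hi.2⟩

lemma IsVertexCover.exists_isMinCover_subset (hS : C.IsVertexCover S) :
    ∃ T ⊆ S, C.IsMinCover T := by
  obtain ⟨T, hTS, hT⟩ := exists_minimal_le_of_wellFoundedLT C.IsVertexCover S hS
  exact ⟨T, hTS, hT.prop, fun U hU hUT => hT.eq_of_le hU hUT⟩

lemma mem_edgeIdeal {f : MvPolynomial (Fin n) K} :
    f ∈ C.edgeIdeal K ↔ ∀ e ∈ f.support, ¬C.IsStable e.support := by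
  rw [edgeIdeal, mem_span_edgeMonomial]
  simp [IsStable]

lemma mem_coverIdeal {f : MvPolynomial (Fin n) K} :
    f ∈ C.coverIdeal K ↔ ∀ e ∈ f.support, C.IsVertexCover e.support := by
  rw [coverIdeal, mem_span_edgeMonomial]
  exact forall₂_congr fun e _ => ⟨fun ⟨_, hS, hSe⟩ => hS.superset hSe, fun h => ⟨_, h, subset_rfl⟩⟩

lemma bddAbove_card_isMinCover (C : Clutter n) :
    BddAbove {k : ℕ | ∃ S : Finset (Fin n), C.IsMinCover S ∧ S.card = k} := by
  refine ⟨n, ?_⟩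
  rintro _ ⟨S, -, rfl⟩
  simpa using S.card_le_univ

lemma IsMinCover.card_le_alpha0' (hS : C.IsMinCover S) : S.card ≤ alpha0' C :=
  le_csSup C.bddAbove_card_isMinCover ⟨S, hS, rfl⟩

end Clutter

section DimensionDepth

variable {K : Type} [Field K] {n : ℕ}

lemma card_sub_le_ringKrullDim_quotient {S : Finset (Fin n)} {J : Ideal (MvPolynomial (Fin n) K)}
    (hJ : ∀ g ∈ J, killCompl (Subtype.val_injective (p := (· ∉ S))) g = 0) :
    ((n - S.card : ℕ) : WithBot ℕ∞) ≤ ringKrullDim (MvPolynomial (Fin n) K ⧸ J) := by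
  let φ := killCompl (R := K) (Subtype.val_injective (p := (· ∉ S)))
  have hφ : Function.Surjective φ := fun p => ⟨_, killCompl_rename_app _ p⟩
  have hdim := ringKrullDim_le_of_surjective (Ideal.Quotient.lift J φ.toRingHom hJ)
    (Ideal.Quotient.lift_surjective_of_surjective _ hJ hφ)
  rw [MvPolynomial.ringKrullDim_of_isNoetherianRing, ringKrullDim_eq_zero_of_field, zero_add,
    Nat.card_eq_fintype_card, Fintype.card_subtype_compl] at hdim
  simpa using hdim

lemma Clutter.IsVertexCover.killCompl_eq_zero {C : Clutter n} {S : Finset (Fin n)}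
    (hS : C.IsVertexCover S) {f : MvPolynomial (Fin n) K} (hf : f ∈ C.edgeIdeal K) :
    killCompl (Subtype.val_injective (p := (· ∉ S))) f = 0 := by
  ext e
  rw [coeff_killCompl, coeff_zero, ← notMem_support_iff]
  intro he
  refine mem_edgeIdeal.1 hf _ he fun E hE hES => ?_
  obtain ⟨i, hiE, hiS⟩ := hS E hE
  have hi := Finsupp.mapDomain_support (hES hiE)
  obtain ⟨j, -, rfl⟩ := Finset.mem_image.1 hi
  exact j.2 hiS

/-- A nonzero element of `R/I(C)` survives modulo the minimal prime of some minimal cover. -/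
lemma Clutter.sub_alpha0'_le_dimR (C : Clutter n)
    {W : Submodule (MvPolynomial (Fin n) K) (MvPolynomial (Fin n) K ⧸ C.edgeIdeal K)}
    (hW : W ≠ ⊥) : ((n - alpha0' C : ℕ) : WithBot ℕ∞) ≤ dimR n K W := by
  obtain ⟨w, hw, hw0⟩ := Submodule.exists_mem_ne_zero_of_ne_bot hW
  obtain ⟨f, rfl⟩ := Ideal.Quotient.mk_surjective w
  rw [Ne, Ideal.Quotient.eq_zero_iff_mem, mem_edgeIdeal] at hw0
  push Not at hw0
  obtain ⟨e, he, hstable⟩ := hw0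
  obtain ⟨S, hSe, hS⟩ := (isVertexCover_compl_iff.2 hstable).exists_isMinCover_subset
  have hfS : killCompl (Subtype.val_injective (p := (· ∉ S))) f ≠ 0 := by
    have hrange : (e.support : Set (Fin n)) ⊆ Set.range (Subtype.val (p := (· ∉ S))) :=
      fun i hi => ⟨⟨i, fun hiS => Finset.mem_compl.1 (hSe hiS) hi⟩, rfl⟩
    refine ne_zero_iff.2 ⟨e.comapDomain _ Subtype.val_injective.injOn, ?_⟩
    rw [coeff_killCompl, Finsupp.mapDomain_comapDomain _ Subtype.val_injective _ hrange]
    exact mem_support_iff.1 he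
  have hann : ∀ g ∈ Module.annihilator (MvPolynomial (Fin n) K) W,
      killCompl (Subtype.val_injective (p := (· ∉ S))) g = 0 := fun g hg => by
    have hgf : g * f ∈ C.edgeIdeal K := by
      rw [← Ideal.Quotient.eq_zero_iff_mem]
      exact congrArg Subtype.val (Module.mem_annihilator.1 hg ⟨_, hw⟩)
    have := hS.1.killCompl_eq_zero hgf
    rw [map_mul] at this
    exact (mul_eq_zero.1 this).resolve_right hfS
  refine le_trans ?_ (card_sub_le_ringKrullDim_quotient hann)
  exact_mod_cast Nat.sub_le_sub_left hS.card_le_alpha0' n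

lemma le_dimR_subQuot_of_filtration {M : Type} [AddCommGroup M]
    [Module (MvPolynomial (Fin n) K) M] {d : WithBot (WithTop ℕ)}
    (hd : ∀ W : Submodule (MvPolynomial (Fin n) K) M, W ≠ ⊥ → d ≤ dimR n K W) {r : ℕ}
    {F : Fin (r + 1) → Submodule (MvPolynomial (Fin n) K) M} (hbot : F 0 = ⊥)
    (hdim : ∀ i j : Fin r, i < j →
      dimR n K (subQuot (F i.castSucc) (F i.succ)) < dimR n K (subQuot (F j.castSucc) (F j.succ)))
    (j : Fin r) (hj : F j.succ ≠ ⊥) : d ≤ dimR n K (subQuot (F j.castSucc) (F j.succ)) := by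
  induction j using WellFoundedLT.induction with
  | ind j ih =>
    by_cases hprev : F j.castSucc = ⊥
    · have e : subQuot (F j.castSucc) (F j.succ) ≃ₗ[MvPolynomial (Fin n) K] F j.succ :=
        Submodule.quotEquivOfEqBot _ (by rw [hprev, Submodule.comap_bot, Submodule.ker_subtype])
      rw [dimR, e.annihilator_eq]
      exact hd _ hj
    · obtain ⟨i, hi⟩ := Fin.exists_succ_eq.2 fun h : j.castSucc = 0 => hprev (h ▸ hbot)
      have hij : i < j := by
        rw [← Fin.castSucc_lt_castSucc_iff, ← hi]
        exact i.castSucc_lt_succ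
      exact (ih i hij (hi ▸ hprev)).trans (hdim i j hij).le

lemma Koszul.exactBelow_sq_of_le_depthR {M : Type} [AddCommGroup M]
    [Module (MvPolynomial (Fin n) K) M] {k : ℕ} (hk : k ≤ depthR n K M) :
    ExactBelow (fun i : Fin n => (X i ^ 2 : MvPolynomial (Fin n) K)) M k := by
  rcases k.eq_zero_or_pos with rfl | hpos
  · exact exactBelow_zero _
  have hsup : depthR n K M ≠ 0 := (hpos.trans_le hk).ne'
  rw [depthR] at hk hsup
  obtain ⟨rs, hlen, hmem, hreg⟩ := Nat.sSup_mem
    (Set.nonempty_iff_ne_empty.2 fun h => hsup (by rw [h, csSup_empty, bot_eq_zero]))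
    (by_contra fun h => hsup (Nat.sSup_of_not_bddAbove h))
  have hradical : maxIdeal n K ≤
      (Ideal.span (Set.range fun i : Fin n => (X i ^ 2 : MvPolynomial (Fin n) K))).radical := by
    rw [maxIdeal, Ideal.span_le]
    rintro _ ⟨i, rfl⟩
    exact ⟨2, Ideal.subset_span ⟨i, rfl⟩⟩
  have h := exactBelow_length_of_isWeaklyRegular (fun r hr => hradical (hmem r hr))
    hreg.toIsWeaklyRegular
  rw [hlen] at h
  exact h.mono hk

/-- The squares `xᵢ²` rather than the variables are used because the multigraded strands of the
Koszul complex of `R/I(C)` on the squares see the links of the faces of the independence complex. -/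
lemma Clutter.exactBelow_sq_of_isSeqCM {C : Clutter n} (h : IsSeqCM K (C.edgeIdeal K)) :
    Koszul.ExactBelow (fun i : Fin n => (X i ^ 2 : MvPolynomial (Fin n) K))
      (MvPolynomial (Fin n) K ⧸ C.edgeIdeal K) (n - alpha0' C) := by
  obtain ⟨r, F, hbot, htop, hF, -, hCM, hdim⟩ := h
  refine Koszul.ExactBelow.of_filtration hbot htop hF fun i => ?_
  rcases hCM i with hsub | hdepth
  · exact Koszul.exactBelow_of_subsingleton _ _
  by_cases hi : F i.succ = ⊥
  · have : Subsingleton (F i.succ) := by rw [hi]; infer_instance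
    exact Koszul.exactBelow_of_subsingleton _ _
  refine Koszul.exactBelow_sq_of_le_depthR ?_
  have hle := le_dimR_subQuot_of_filtration (fun _ => C.sub_alpha0'_le_dimR) hbot hdim i hi
  rw [← hdepth] at hle
  exact Nat.cast_le.1 (WithBot.coe_le_coe.1 hle)

end DimensionDepth

namespace Koszul

/-! ### Multigraded strands of the Koszul complex of the variables -/

variable {σ R : Type*} [LinearOrder σ] [CommRing R]

/-- The part of multidegree `b` of a Koszul chain `f` with coefficients in `R[σ]`, where `e_T` has
multidegree `squarefreeExponent T`, as a chain with coefficients in `R`. -/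
noncomputable def strand (b : σ →₀ ℕ) (f : Finset σ → MvPolynomial σ R) : Finset σ → R :=
  fun T => if T ⊆ b.support then coeff (b - squarefreeExponent T) (f T) else 0

/-- The Koszul chain with coefficients in `R[σ]` concentrated in multidegree `b` with the given
strand. -/
noncomputable def ofStrand (b : σ →₀ ℕ) (c : Finset σ → R) : Finset σ → MvPolynomial σ R :=
  fun T => if T ⊆ b.support then monomial (b - squarefreeExponent T) (c T) else 0

lemma subset_support_and_coeff_ne_zero_of_strand_ne_zero {b : σ →₀ ℕ}
    {f : Finset σ → MvPolynomial σ R} {T : Finset σ} (h : strand b f T ≠ 0) :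
    T ⊆ b.support ∧ coeff (b - squarefreeExponent T) (f T) ≠ 0 := by
  rw [strand] at h
  split_ifs at h with hT
  exacts [⟨hT, h⟩, absurd rfl h]

lemma strand_add_squarefreeExponent (e : σ →₀ ℕ) (f : Finset σ → MvPolynomial σ R)
    (T : Finset σ) : strand (e + squarefreeExponent T) f T = coeff e (f T) := by
  rw [strand, if_pos (squarefreeExponent_le_iff.1 le_add_self), add_tsub_cancel_right]

lemma coeff_ofStrand (e b : σ →₀ ℕ) (c : Finset σ → R) (T : Finset σ) :
    coeff e (ofStrand b c T) = if b = e + squarefreeExponent T then c T else 0 := by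
  rw [ofStrand]
  split_ifs with hT hb hb
  · rw [hb, add_tsub_cancel_right, coeff_monomial, if_pos rfl]
  · rw [coeff_monomial, if_neg]
    rwa [tsub_eq_iff_eq_add_of_le (squarefreeExponent_le_iff.2 hT)]
  · exact absurd (squarefreeExponent_le_iff.1 (hb ▸ le_add_self)) hT
  · rfl

lemma exists_sum_ofStrand_strand_eq [Finite σ] (f : Finset σ → MvPolynomial σ R) :
    ∃ B : Finset (σ →₀ ℕ), ∑ b ∈ B, ofStrand b (strand b f) = f := by
  have := Fintype.ofFinite σ
  refine ⟨Finset.univ.biUnion fun T => (f T).support.image (· + squarefreeExponent T), ?_⟩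
  ext T e
  rw [Finset.sum_apply, coeff_sum]
  simp only [coeff_ofStrand]
  rw [Finset.sum_ite_eq', strand_add_squarefreeExponent]
  refine ite_eq_left_iff.2 fun h => (notMem_support_iff.1 fun he => h ?_).symm
  exact Finset.mem_biUnion.2 ⟨T, Finset.mem_univ T, Finset.mem_image_of_mem _ he⟩

lemma wedge_ne_zero {M : Type*} [AddCommGroup M] [Module R M] {v : σ} {c : Finset σ → M}
    {T : Finset σ} (h : wedge R v c T ≠ 0) : v ∈ T ∧ c (T.erase v) ≠ 0 := by
  rw [wedge_apply] at h
  split_ifs at h with hv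
  exacts [⟨hv, fun h0 => h (by rw [h0, smul_zero])⟩, absurd rfl h]

variable [Fintype σ]

lemma boundary_strand (b : σ →₀ ℕ) (f : Finset σ → MvPolynomial σ R) :
    boundary (1 : σ → R) (strand b f) = strand b (boundary (X (R := R)) f) := by
  ext T
  rw [boundary_apply, strand]
  split_ifs with hT
  · rw [boundary_apply, coeff_sum]
    refine Finset.sum_congr rfl fun i hi => ?_
    have hiT : i ∉ T := Finset.mem_compl.1 hi
    have hsupp : i ∈ (b - squarefreeExponent T).support ↔ insert i T ⊆ b.support := by
      simp [Finset.insert_subset_iff, hT, squarefreeExponent_apply, hiT]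
    rw [smul_eq_mul (X i), coeff_X_mul', Pi.one_apply, one_smul, strand]
    simp only [hsupp, squarefreeExponent_insert hiT, tsub_add_eq_tsub_tsub]
    split_ifs
    · exact (map_zsmul (coeffAddMonoidHom (R := R) _) _ _).symm
    · exact smul_zero _
  · refine Finset.sum_eq_zero fun i _ => ?_
    rw [strand, if_neg fun h => hT ((Finset.subset_insert i T).trans h), smul_zero, smul_zero]

lemma boundary_strand_eq_zero (b : σ →₀ ℕ) {f : Finset σ → MvPolynomial σ R}
    (hf : boundary (X (R := R)) f = 0) : boundary (1 : σ → R) (strand b f) = 0 := by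
  rw [boundary_strand, hf]
  ext
  simp [strand]

lemma boundary_ofStrand {b : σ →₀ ℕ} {c : Finset σ → R} (hc : ∀ T, c T ≠ 0 → T ⊆ b.support) :
    boundary (X (R := R)) (ofStrand b c) = ofStrand b (boundary (1 : σ → R) c) := by
  ext T : 1
  rw [boundary_apply, ofStrand]
  split_ifs with hT
  · rw [boundary_apply, map_sum]
    refine Finset.sum_congr rfl fun i hi => ?_
    rw [Pi.one_apply, one_smul, map_zsmul, smul_comm, ofStrand]
    split_ifs with hiT
    · have hle : Finsupp.single i 1 ≤ b - squarefreeExponent T := by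
        rw [le_tsub_iff_left (squarefreeExponent_le_iff.2 hT),
          ← squarefreeExponent_insert (Finset.mem_compl.1 hi)]
        exact squarefreeExponent_le_iff.2 hiT
      rw [smul_eq_mul, X, monomial_mul, one_mul, squarefreeExponent_insert (Finset.mem_compl.1 hi),
        tsub_add_eq_tsub_tsub, add_tsub_cancel_of_le hle]
    · rw [not_imp_comm.1 (hc _) hiT, map_zero, smul_zero]
  · refine Finset.sum_eq_zero fun i _ => ?_
    rw [ofStrand, if_neg fun h => hT ((Finset.subset_insert i T).trans h), smul_zero, smul_zero]

lemma exists_boundary_eq_of_strands {f : Finset σ → MvPolynomial σ R}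
    (P : Finset σ → (σ →₀ ℕ) → Prop)
    (h : ∀ b, ∃ g : Finset σ → R, (∀ T, g T ≠ 0 → T ⊆ b.support ∧ P T (b - squarefreeExponent T)) ∧
      boundary (1 : σ → R) g = strand b f) :
    ∃ g : Finset σ → MvPolynomial σ R, (∀ T, ∀ e ∈ (g T).support, P T e) ∧
      boundary (X (R := R)) g = f := by
  choose g hg hgf using h
  obtain ⟨B, hB⟩ := exists_sum_ofStrand_strand_eq f
  refine ⟨∑ b ∈ B, ofStrand b (g b), fun T e he => ?_, ?_⟩
  · rw [Finset.sum_apply, mem_support_iff, coeff_sum] at he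
    obtain ⟨b, -, hb⟩ := Finset.exists_ne_zero_of_sum_ne_zero he
    rw [coeff_ofStrand] at hb
    split_ifs at hb with hbe
    · have := (hg b T hb).2
      rwa [hbe, add_tsub_cancel_right] at this
    · exact absurd rfl hb
  · rw [map_sum]
    refine (Finset.sum_congr rfl fun b _ => ?_).trans hB
    rw [boundary_ofStrand fun T hT => (hg b T hT).1, hgf]

lemma boundary_wedge_of_cycle {M : Type*} [AddCommGroup M] [Module R M] {b : σ → R} {v : σ}
    (hv : b v = 1) {c : Finset σ → M} (hc : boundary b c = 0) : boundary b (wedge R v c) = c := by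
  have h := boundary_wedge_add b v c
  rwa [hc, map_zero, add_zero, hv, one_smul] at h

/-- The Koszul complex of the variables is a resolution of `R[σ]/(σ)`. -/
lemma exists_boundary_eq_of_coeff_zero_eq_zero {p : ℕ} {f : Finset σ → MvPolynomial σ R}
    (hfp : ∀ T, T.card < p → f T = 0) (hf : boundary (X (R := R)) f = 0) (hf0 : coeff 0 (f ∅) = 0) :
    ∃ g : Finset σ → MvPolynomial σ R, (∀ T, T.card < p + 1 → g T = 0) ∧
      boundary (X (R := R)) g = f := by
  suffices h : ∀ b, ∃ g : Finset σ → R, (∀ T, g T ≠ 0 → T ⊆ b.support ∧ p + 1 ≤ T.card) ∧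
      boundary (1 : σ → R) g = strand b f by
    obtain ⟨g, hgp, hg⟩ := exists_boundary_eq_of_strands (fun T _ => p + 1 ≤ T.card) h
    refine ⟨g, fun T hT => support_eq_empty.1 (Finset.eq_empty_of_forall_notMem fun e he => ?_), hg⟩
    exact (hgp T e he).not_gt hT
  intro b
  by_cases hb : ∃ v, v ∈ b.support
  · obtain ⟨v, hv⟩ := hb
    refine ⟨wedge R v (strand b f), fun T hT => ?_,
      boundary_wedge_of_cycle (b := (1 : σ → R)) rfl (boundary_strand_eq_zero b hf)⟩
    obtain ⟨hvT, hT⟩ := wedge_ne_zero hT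
    obtain ⟨hTb, hfT⟩ := subset_support_and_coeff_ne_zero_of_strand_ne_zero hT
    refine ⟨fun i hi => ?_, ?_⟩
    · rcases eq_or_ne i v with rfl | hiv
      exacts [hv, hTb (Finset.mem_erase.2 ⟨hiv, hi⟩)]
    · rw [← Finset.card_erase_add_one hvT, Nat.add_le_add_iff_right]
      by_contra hlt
      exact hfT (by rw [hfp _ (not_le.1 hlt), coeff_zero])
  · have hb0 : b = 0 := Finsupp.support_eq_empty.1
      (Finset.eq_empty_of_forall_notMem fun v hv => hb ⟨v, hv⟩)
    refine ⟨0, fun T hT => absurd rfl hT, ?_⟩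
    rw [map_zero, eq_comm]
    ext T
    by_contra hT
    obtain ⟨hTb, hfT⟩ := subset_support_and_coeff_ne_zero_of_strand_ne_zero hT
    obtain rfl : T = ∅ := Finset.subset_empty.1 (by rwa [hb0, Finsupp.support_zero] at hTb)
    rw [hb0, zero_tsub] at hfT
    exact hfT hf0

lemma exists_boundary_eq_of_coeff_zero_eq_zero_pi {ι : Type*} {p : ℕ}
    {f : Finset σ → ι → MvPolynomial σ R} (hfp : ∀ T, T.card < p → f T = 0)
    (hf : boundary (X (R := R)) f = 0) (hf0 : ∀ j, coeff 0 (f ∅ j) = 0) :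
    ∃ g : Finset σ → ι → MvPolynomial σ R,
      (∀ T, T.card < p + 1 → g T = 0) ∧ boundary (X (R := R)) g = f := by
  have happly : ∀ (h : Finset σ → ι → MvPolynomial σ R) j,
      boundary (X (R := R)) (fun T => h T j) = fun T => boundary (X (R := R)) h T j :=
    fun h j => boundary_comp X (LinearMap.proj j) h
  have hcoord : ∀ j, ∃ g : Finset σ → MvPolynomial σ R,
      (∀ T, T.card < p + 1 → g T = 0) ∧ boundary (X (R := R)) g = fun T => f T j := fun j =>
    exists_boundary_eq_of_coeff_zero_eq_zero (fun T hT => congrFun (hfp T hT) j)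
      (by rw [happly, hf]; rfl) (hf0 j)
  choose g hgp hg using hcoord
  refine ⟨fun T j => g j T, fun T hT => funext fun j => hgp j T hT, ?_⟩
  ext T j : 2
  rw [← congrFun (happly _ j) T, hg]

end Koszul

namespace Koszul

/-! ### Links -/

section Link

variable {σ M : Type*} [LinearOrder σ] [AddCommGroup M]

/-- The sign `∏_{i ∈ T} sign i F` comparing `e_T ∧ e_F` with `± e_{T ∪ F}`, up to a sign
depending only on `F`. -/
def linkSign (F T : Finset σ) : ℤ := ∏ i ∈ T, sign i F

lemma linkSign_mul_self (F T : Finset σ) : linkSign F T * linkSign F T = 1 := by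
  rw [linkSign, ← Finset.prod_mul_distrib]
  exact Finset.prod_eq_one fun i _ => sign_mul_self i F

/-- Restriction of a chain to the sets containing `F`, as a chain on the sets disjoint from `F`. -/
def link (F : Finset σ) (f : Finset σ → M) : Finset σ → M :=
  fun T => if Disjoint T F then linkSign F T • f (T ∪ F) else 0

/-- The section of `link F` with values in the chains supported on the sets containing `F`. -/
def join (F : Finset σ) (c : Finset σ → M) : Finset σ → M :=
  fun U => if F ⊆ U then linkSign F (U \ F) • c (U \ F) else 0

lemma link_join {F : Finset σ} {c : Finset σ → M} (hc : ∀ T, c T ≠ 0 → Disjoint T F) :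
    link F (join F c) = c := by
  ext T
  rw [link]
  split_ifs with hT
  · rw [join, if_pos Finset.subset_union_right, Finset.union_sdiff_cancel_right hT, smul_smul,
      linkSign_mul_self, one_smul]
  · exact (not_imp_comm.1 (hc T) hT).symm

lemma link_congr {F : Finset σ} {f g : Finset σ → M} (h : ∀ T, F ⊆ T → f T = g T) :
    link F f = link F g := by
  ext T
  rw [link, link, h _ Finset.subset_union_right]

lemma eq_zero_of_link_eq_zero {F : Finset σ} {f : Finset σ → M} (h : link F f = 0)
    {U : Finset σ} (hU : F ⊆ U) : f U = 0 := by
  have hlink := congrFun h (U \ F)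
  rw [link, if_pos Finset.sdiff_disjoint, Finset.sdiff_union_of_subset hU, Pi.zero_apply] at hlink
  rw [← one_zsmul (f U), ← linkSign_mul_self F (U \ F), mul_smul, hlink, smul_zero]

lemma boundary_link {R : Type*} [CommRing R] [Module R M] [Fintype σ] (F : Finset σ)
    (f : Finset σ → M) :
    boundary (1 : σ → R) (link F f) = link F (boundary (1 : σ → R) f) := by
  ext T
  rw [boundary_apply, link]
  split_ifs with hT
  · rw [boundary_apply, Finset.smul_sum]
    refine (Finset.sum_subset (Finset.compl_subset_compl.2 Finset.subset_union_left)
      fun i _ hi => ?_).symm.trans (Finset.sum_congr rfl fun i hi => ?_)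
    · rw [link, if_neg, smul_zero, smul_zero]
      simp_all [Finset.disjoint_insert_left]
    · obtain ⟨hiT, hiF⟩ : i ∉ T ∧ i ∉ F := by simpa using hi
      rw [Pi.one_apply, one_smul, one_smul, link,
        if_pos (Finset.disjoint_insert_left.2 ⟨hiF, hT⟩), linkSign, Finset.prod_insert hiT,
        ← linkSign, Finset.insert_union, sign_union i hT, smul_smul, smul_smul]
      ring_nf
  · refine Finset.sum_eq_zero fun i _ => ?_
    rw [link, if_neg fun h => hT (h.mono_left (Finset.subset_insert i T)), smul_zero, smul_zero]

end Link

/-! ### Koszul homology of a Stanley–Reisner ring and of its Alexander dual -/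

lemma exists_eq_of_dotProduct_adjoint {K ι : Type*} [Field K] [Fintype ι]
    {D D' : (ι → K) →ₗ[K] ι → K} (hadj : ∀ f g, f ⬝ᵥ D g = D' f ⬝ᵥ g) {c : ι → K}
    (hc : ∀ f, D f = 0 → c ⬝ᵥ f = 0) : ∃ g, D' g = c := by
  classical
  have hmem : dotProductEquiv K ι c ∈ (LinearMap.ker D).dualAnnihilator :=
    (Submodule.mem_dualAnnihilator _).2 hc
  rw [← LinearMap.range_dualMap_eq_dualAnnihilator_ker] at hmem
  obtain ⟨μ, hμ⟩ := hmem
  obtain ⟨g, rfl⟩ := (dotProductEquiv K ι).surjective μ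
  refine ⟨g, (dotProductEquiv K ι).injective (LinearMap.ext fun f => ?_)⟩
  rw [← hμ]
  exact (hadj g f).symm

lemma exists_eqOn_of_dotProduct_adjoint {K ι : Type*} [Field K] [Fintype ι]
    {D D' : (ι → K) →ₗ[K] ι → K} (hadj : ∀ f g, f ⬝ᵥ D g = D' f ⬝ᵥ g) {c : ι → K}
    (P Q : Set ι) (hc : ∀ f, Function.support f ⊆ Q → (∀ i ∈ P, D f i = 0) → c ⬝ᵥ f = 0) :
    ∃ g, Function.support g ⊆ P ∧ Set.EqOn (D' g) c Q := by
  classical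
  let χ (s : Set ι) := LinearMap.mulLeft K (s.indicator (1 : ι → K))
  have hχ (s f) : χ s f = s.indicator f := by
    ext i
    simp [χ, Set.indicator_apply]
  have hχ_adj (s) (f g : ι → K) : f ⬝ᵥ χ s g = χ s f ⬝ᵥ g := by
    simp only [dotProduct, hχ, Set.indicator_apply, mul_ite, ite_mul, mul_zero, zero_mul]
  obtain ⟨g, hg⟩ := exists_eq_of_dotProduct_adjoint (D := χ P ∘ₗ D ∘ₗ χ Q) (D' := χ Q ∘ₗ D' ∘ₗ χ P)
    (c := χ Q c) (fun f g => by simp only [LinearMap.comp_apply, hχ_adj, hadj]) (fun f hf => by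
      rw [← hχ_adj]
      refine hc _ (by rw [hχ]; exact Set.support_indicator_subset) fun i hi => ?_
      have hfi := congrFun hf i
      rwa [LinearMap.comp_apply, hχ P, Set.indicator_of_mem hi] at hfi)
  refine ⟨χ P g, by rw [hχ]; exact Set.support_indicator_subset, fun i hi => ?_⟩
  have hgi := congrFun hg i
  rwa [LinearMap.comp_apply, LinearMap.comp_apply, hχ Q, hχ Q, Set.indicator_of_mem hi,
    Set.indicator_of_mem hi] at hgi

section Duality

variable {K : Type} [Field K] {n : ℕ} {C : Clutter n} {F T : Finset (Fin n)}

/-- The exponent vector with support `F ∪ T` equal to `1` on `F` and to `2` outside `F`: the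
component of multidegree `linkExponent F T` of a Koszul complex on `X i ^ 2` sees the link
of `F`. -/
noncomputable def linkExponent (F T : Finset (Fin n)) : Fin n →₀ ℕ :=
  squarefreeExponent F + 2 • squarefreeExponent (T \ F)

lemma support_linkExponent (F T : Finset (Fin n)) : (linkExponent F T).support = F ∪ T := by
  ext i
  by_cases hi : i ∈ F <;> simp [linkExponent, squarefreeExponent_apply, hi]

lemma linkExponent_eq_erase_add {i : Fin n} (hi : i ∈ T) (hiF : i ∉ F) :
    linkExponent F T = linkExponent F (T.erase i) + Finsupp.single i 2 := by
  have hT : T \ F = insert i (T.erase i \ F) := by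
    rw [← Finset.insert_sdiff_of_notMem _ hiF, Finset.insert_erase hi]
  rw [linkExponent, hT, squarefreeExponent_insert (by simp), smul_add, ← add_assoc,
    Finsupp.smul_single_one, linkExponent]

lemma single_two_le_linkExponent_iff {i : Fin n} (hi : i ∈ T) :
    Finsupp.single i 2 ≤ linkExponent F T ↔ i ∉ F := by
  rw [Finsupp.single_le_iff]
  by_cases hiF : i ∈ F <;> simp [linkExponent, squarefreeExponent_apply, hi, hiF]

lemma coboundary_monomial_linkExponent {c : Finset (Fin n) → K} (hc : ∀ T, c T ≠ 0 → F ⊆ T)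
    (T : Finset (Fin n)) :
    coboundary (fun i : Fin n => (X i ^ 2 : MvPolynomial (Fin n) K))
        (fun T => monomial (linkExponent F T) (c T)) T =
      monomial (linkExponent F T) (coboundary (1 : Fin n → K) c T) := by
  rw [coboundary_apply, coboundary_apply, map_sum]
  refine Finset.sum_congr rfl fun i hi => ?_
  rw [Pi.one_apply, one_smul, map_zsmul, smul_comm]
  by_cases hcT : c (T.erase i) = 0
  · simp only [hcT, map_zero, smul_zero]
  · have hiF : i ∉ F := fun hiF => Finset.notMem_erase i T (hc _ hcT hiF)
    rw [smul_eq_mul, X_pow_eq_monomial, monomial_mul, one_mul, linkExponent_eq_erase_add hi hiF,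
      add_comm]

lemma coeff_linkExponent_coboundary (f : Finset (Fin n) → MvPolynomial (Fin n) K) (h : F ⊆ T) :
    coeff (linkExponent F T)
        (coboundary (fun i : Fin n => (X i ^ 2 : MvPolynomial (Fin n) K)) f T) =
      coboundary (1 : Fin n → K)
        (fun T => if F ⊆ T then coeff (linkExponent F T) (f T) else 0) T := by
  rw [coboundary_apply, coboundary_apply, coeff_sum]
  refine Finset.sum_congr rfl fun i hi => ?_
  have herase : F ⊆ T.erase i ↔ i ∉ F := by simp [Finset.subset_erase, h]
  rw [Pi.one_apply, one_smul, smul_comm, ← coeffAddMonoidHom_apply, map_zsmul,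
    coeffAddMonoidHom_apply, smul_eq_mul, X_pow_eq_monomial, coeff_monomial_mul']
  simp only [herase, single_two_le_linkExponent_iff hi, one_mul]
  split_ifs with hiF
  · rfl
  · rw [linkExponent_eq_erase_add hi hiF, add_tsub_cancel_right]

lemma ExactBelow.exists_coboundary_eq_of_subset {k : ℕ}
    (h : ExactBelow (fun i : Fin n => (X i ^ 2 : MvPolynomial (Fin n) K))
      (MvPolynomial (Fin n) K ⧸ C.edgeIdeal K) k)
    {c : Finset (Fin n) → K} (hc : ∀ T, c T ≠ 0 → F ⊆ T ∧ T.card < k)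
    (hd : ∀ T, C.IsStable T → coboundary (1 : Fin n → K) c T = 0) :
    ∃ g : Finset (Fin n) → K, (∀ T, g T ≠ 0 → F ⊆ T) ∧
      ∀ T, F ⊆ T → C.IsStable T → coboundary (1 : Fin n → K) g T = c T := by
  let π := (C.edgeIdeal K).mkQ
  let f : Finset (Fin n) → MvPolynomial (Fin n) K := fun T => monomial (linkExponent F T) (c T)
  have hπ {p q} : π p = π q ↔ p - q ∈ C.edgeIdeal K := Submodule.Quotient.eq _
  obtain ⟨g, hg⟩ := h (π ∘ f)
    (fun T hT => by
      have hcT : c T = 0 := not_imp_comm.1 (hc T) fun hT' => hT'.2.not_ge hT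
      simp only [Function.comp_apply, f, hcT, map_zero])
    (by
      rw [coboundary_comp]
      ext T
      rw [Function.comp_apply, Pi.zero_apply, ← map_zero π, hπ, sub_zero,
        coboundary_monomial_linkExponent fun T hT => (hc T hT).1, Clutter.mem_edgeIdeal]
      intro e he hstable
      rw [Finset.mem_singleton.1 (support_monomial_subset he), support_linkExponent] at hstable
      simp [hd T (hstable.subset Finset.subset_union_right)] at he)
  obtain ⟨y, rfl, -⟩ := exists_comp_eq_of_surjective (C.edgeIdeal K).mkQ_surjective g
  refine ⟨fun T => if F ⊆ T then coeff (linkExponent F T) (y T) else 0,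
    fun T hT => not_imp_comm.1 (fun h => if_neg h) hT, fun T hFT hT => ?_⟩
  have hmem := hπ.1 (congrFun ((coboundary_comp _ π y).symm.trans hg) T)
  rw [← coeff_linkExponent_coboundary y hFT]
  by_contra hne
  refine Clutter.mem_edgeIdeal.1 hmem (linkExponent F T) ?_ ?_
  · rwa [mem_support_iff, coeff_sub, coeff_monomial, if_pos rfl, sub_ne_zero]
  · rwa [support_linkExponent, Finset.union_eq_right.2 hFT]

lemma ExactBelow.exists_boundary_eq_of_subset {k : ℕ}
    (h : ExactBelow (fun i : Fin n => (X i ^ 2 : MvPolynomial (Fin n) K))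
      (MvPolynomial (Fin n) K ⧸ C.edgeIdeal K) k)
    {c : Finset (Fin n) → K} (hc : ∀ T, c T ≠ 0 → F ⊆ T ∧ C.IsStable T ∧ T.card < k)
    (hd : ∀ T, F ⊆ T → boundary (1 : Fin n → K) c T = 0) :
    ∃ g : Finset (Fin n) → K, (∀ T, g T ≠ 0 → C.IsStable T) ∧
      ∀ T, F ⊆ T → boundary (1 : Fin n → K) g T = c T := by
  have hperp (f : Finset (Fin n) → K)
      (hf : Function.support f ⊆ {T | F ⊆ T ∧ C.IsStable T ∧ T.card < k})
      (hfd : ∀ T ∈ {T | C.IsStable T ∧ T.card ≤ k}, coboundary (1 : Fin n → K) f T = 0) :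
      c ⬝ᵥ f = 0 := by
    have hfd' (T) (hT : C.IsStable T) : coboundary (1 : Fin n → K) f T = 0 := by
      by_cases hTk : T.card ≤ k
      · exact hfd T ⟨hT, hTk⟩
      · exact coboundary_apply_eq_zero _ (k := k + 1) (fun T hT' =>
          not_imp_comm.1 (@hf T) fun hQ => hQ.2.2.not_ge (by lia)) (not_le.1 hTk)
    obtain ⟨u, huF, hu⟩ := h.exists_coboundary_eq_of_subset
      (fun T hT => ⟨(hf hT).1, (hf hT).2.2⟩) hfd'
    calc c ⬝ᵥ f = c ⬝ᵥ coboundary (1 : Fin n → K) u := Finset.sum_congr rfl fun T _ => by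
          by_cases hT : c T = 0
          · rw [hT, zero_mul, zero_mul]
          · rw [hu T (hc T hT).1 (hc T hT).2.1]
      _ = boundary (1 : Fin n → K) c ⬝ᵥ u := dotProduct_coboundary _ _ _
      _ = 0 := Finset.sum_eq_zero fun T _ => by
          by_cases hT : u T = 0
          · rw [hT, mul_zero]
          · rw [hd T (huF T hT), zero_mul]
  obtain ⟨g, hgP, hg⟩ :=
    exists_eqOn_of_dotProduct_adjoint (dotProduct_coboundary (1 : Fin n → K)) _ _ hperp
  refine ⟨g, fun T hT => (hgP hT).1, fun T hFT => ?_⟩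
  by_cases hT : C.IsStable T ∧ T.card < k
  · exact hg ⟨hFT, hT⟩
  rw [not_imp_comm.1 (hc T) fun h => hT h.2, boundary_apply]
  refine Finset.sum_eq_zero fun i hi => ?_
  have hgi : g (insert i T) = 0 := not_imp_comm.1 (@hgP (insert i T)) fun ⟨hstable, hcard⟩ => by
    rw [Finset.card_insert_of_notMem (Finset.mem_compl.1 hi)] at hcard
    exact hT ⟨hstable.subset (Finset.subset_insert i T), hcard⟩
  rw [hgi, smul_zero, smul_zero]

lemma ExactBelow.exists_boundary_eq_of_disjoint {k : ℕ}
    (h : ExactBelow (fun i : Fin n => (X i ^ 2 : MvPolynomial (Fin n) K))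
      (MvPolynomial (Fin n) K ⧸ C.edgeIdeal K) k)
    {c : Finset (Fin n) → K}
    (hc : ∀ T, c T ≠ 0 → Disjoint T F ∧ C.IsStable (T ∪ F) ∧ (T ∪ F).card < k)
    (hd : boundary (1 : Fin n → K) c = 0) :
    ∃ g : Finset (Fin n) → K, (∀ T, g T ≠ 0 → Disjoint T F ∧ C.IsStable (T ∪ F)) ∧
      boundary (1 : Fin n → K) g = c := by
  have hlink := link_join fun T hT => (hc T hT).1
  obtain ⟨g, hg, hgc⟩ := h.exists_boundary_eq_of_subset (F := F) (c := join F c)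
    (fun U hU => by
      rw [join] at hU
      split_ifs at hU with hFU
      · have hcU := hc (U \ F) fun h0 => hU (by rw [h0, smul_zero])
        rw [Finset.sdiff_union_of_subset hFU] at hcU
        exact ⟨hFU, hcU.2⟩
      · exact absurd rfl hU)
    (fun U hFU => eq_zero_of_link_eq_zero (by rw [← boundary_link, hlink, hd]) hFU)
  refine ⟨link F g, fun T hT => ?_, ?_⟩
  · rw [link] at hT
    split_ifs at hT with hTF
    · exact ⟨hTF, hg _ fun h0 => hT (by rw [h0, smul_zero])⟩
    · exact absurd rfl hT
  · rw [boundary_link, link_congr hgc, hlink]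

lemma exists_boundary_eq_strand_of_two_le {f : Finset (Fin n) → MvPolynomial (Fin n) K}
    (hf : ∀ T, f T ∈ C.coverIdeal K) (hd : boundary (X (R := K)) f = 0) {b : Fin n →₀ ℕ} {v : Fin n}
    (hv : 2 ≤ b v) :
    ∃ g : Finset (Fin n) → K,
      (∀ T, g T ≠ 0 → T ⊆ b.support ∧ C.IsVertexCover (b - squarefreeExponent T).support) ∧
      boundary (1 : Fin n → K) g = strand b f := by
  refine ⟨wedge K v (strand b f), fun T hT => ?_,
    boundary_wedge_of_cycle (b := (1 : Fin n → K)) rfl (boundary_strand_eq_zero b hd)⟩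
  obtain ⟨hvT, hT⟩ := wedge_ne_zero hT
  obtain ⟨hTb, hfT⟩ := subset_support_and_coeff_ne_zero_of_strand_ne_zero hT
  have hcover := Clutter.mem_coverIdeal.1 (hf _) _ (mem_support_iff.2 hfT)
  refine ⟨fun i hi => ?_, hcover.superset fun i hi => ?_⟩
  · rcases eq_or_ne i v with rfl | hiv
    · exact Finsupp.mem_support_iff.2 (by lia)
    · exact hTb (Finset.mem_erase.2 ⟨hiv, hi⟩)
  · rcases eq_or_ne i v with rfl | hiv
    · simp only [Finsupp.mem_support_iff, Finsupp.tsub_apply, squarefreeExponent_apply, if_pos hvT]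
      lia
    · simpa [squarefreeExponent_apply, hiv] using hi

lemma ExactBelow.exists_boundary_eq_strand_squarefreeExponent {d m : ℕ} (hm : d < m)
    (h : ExactBelow (fun i : Fin n => (X i ^ 2 : MvPolynomial (Fin n) K))
      (MvPolynomial (Fin n) K ⧸ C.edgeIdeal K) (n - d))
    {f : Finset (Fin n) → MvPolynomial (Fin n) K} (hf : ∀ T, f T ∈ C.coverIdeal K)
    (hdeg : ∀ T, (f T).IsHomogeneous m) (hd : boundary (X (R := K)) f = 0) (B : Finset (Fin n)) :
    ∃ g : Finset (Fin n) → K, (∀ T, g T ≠ 0 → T ⊆ B ∧ C.IsVertexCover (B \ T)) ∧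
      boundary (1 : Fin n → K) g = strand (squarefreeExponent B) f := by
  have hcompl (T) : (T ∪ Bᶜ)ᶜ = B \ T := by
    rw [Finset.compl_union, compl_compl, Finset.inter_comm, ← Finset.sdiff_eq_inter_compl]
  obtain ⟨g, hg, hgf⟩ := h.exists_boundary_eq_of_disjoint (F := Bᶜ)
    (c := strand (squarefreeExponent B) f) (fun T hT => by
      obtain ⟨hTB, hfT⟩ := subset_support_and_coeff_ne_zero_of_strand_ne_zero hT
      rw [support_squarefreeExponent] at hTB
      rw [squarefreeExponent_sub] at hfT
      have hcover := Clutter.mem_coverIdeal.1 (hf T) _ (mem_support_iff.2 hfT)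
      rw [support_squarefreeExponent, ← hcompl, Clutter.isVertexCover_compl_iff] at hcover
      refine ⟨disjoint_compl_right_iff.2 hTB, hcover, ?_⟩
      have hcard := Finset.card_add_card_compl (T ∪ Bᶜ)
      rw [hcompl, ← degree_squarefreeExponent (B \ T), Fintype.card_fin] at hcard
      have hdegree : (squarefreeExponent (B \ T)).degree = m :=
        not_imp_comm.1 (hdeg T).coeff_eq_zero hfT
      lia)
    (boundary_strand_eq_zero _ hd)
  refine ⟨g, fun T hT => ?_, hgf⟩
  obtain ⟨hTB, hstable⟩ := hg T hT
  rw [← hcompl, Clutter.isVertexCover_compl_iff]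
  exact ⟨disjoint_compl_right_iff.1 hTB, hstable⟩

/-- By Alexander duality, a vanishing range for the Koszul cohomology of `R/I(C)` bounds the
degrees of the Koszul homology of the ideal of covers. -/
lemma ExactBelow.exists_boundary_eq_of_mem_coverIdeal {d m : ℕ} (hm : d < m)
    (h : ExactBelow (fun i : Fin n => (X i ^ 2 : MvPolynomial (Fin n) K))
      (MvPolynomial (Fin n) K ⧸ C.edgeIdeal K) (n - d))
    {f : Finset (Fin n) → MvPolynomial (Fin n) K} (hf : ∀ T, f T ∈ C.coverIdeal K)
    (hdeg : ∀ T, (f T).IsHomogeneous m) (hd : boundary (X (R := K)) f = 0) :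
    ∃ g : Finset (Fin n) → MvPolynomial (Fin n) K,
      (∀ T, g T ∈ C.coverIdeal K) ∧ boundary (X (R := K)) g = f := by
  simp only [Clutter.mem_coverIdeal]
  refine exists_boundary_eq_of_strands (fun _ e => C.IsVertexCover e.support) fun b => ?_
  by_cases hb : ∃ v, 2 ≤ b v
  · exact exists_boundary_eq_strand_of_two_le hf hd hb.choose_spec
  · have hsq := eq_squarefreeExponent_support (e := b) (by simpa [Nat.lt_succ_iff] using hb)
    obtain ⟨g, hg, hgf⟩ := h.exists_boundary_eq_strand_squarefreeExponent hm hf hdeg hd b.support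
    rw [← hsq] at hgf
    refine ⟨g, fun T hT => ⟨(hg T hT).1, ?_⟩, hgf⟩
    rw [hsq, squarefreeExponent_sub, support_squarefreeExponent]
    exact (hg T hT).2

end Duality

end Koszul

/-! ### Graded free modules -/

section GradedFree

variable {σ R ι κ : Type*} [CommRing R] {tw : ι → ℕ} {tw' : κ → ℕ} {D : Set ℕ} {m : ℕ}

/-- In the graded free module `⊕ⱼ R[σ](-tw j)`, whose `j`-th basis vector has degree `tw j`, the
nonzero homogeneous components of `w` have degrees in `D`. Homogeneity of degree `m` is the case
`D = {m}`. -/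
def HasTwistedDegreesIn (tw : ι → ℕ) (D : Set ℕ) (w : ι → MvPolynomial σ R) : Prop :=
  ∀ j, ∀ e ∈ (w j).support, e.degree + tw j ∈ D

/-- The homogeneous component of degree `m` in the graded free module `⊕ⱼ R[σ](-tw j)`. -/
noncomputable def twistedComponent (tw : ι → ℕ) (m : ℕ) :
    (ι → MvPolynomial σ R) →ₗ[R] (ι → MvPolynomial σ R) :=
  LinearMap.pi fun j =>
    if tw j ≤ m then homogeneousComponent (m - tw j) ∘ₗ LinearMap.proj j else 0

lemma coeff_twistedComponent (tw : ι → ℕ) (m : ℕ) (w : ι → MvPolynomial σ R) (j : ι)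
    (e : σ →₀ ℕ) :
    coeff e (twistedComponent tw m w j) = if e.degree + tw j = m then coeff e (w j) else 0 := by
  rw [twistedComponent, LinearMap.pi_apply]
  split_ifs with hle hm hm
  · rw [LinearMap.comp_apply, coeff_homogeneousComponent, if_pos (by lia), LinearMap.proj_apply]
  · rw [LinearMap.comp_apply, coeff_homogeneousComponent, if_neg (by lia)]
  · lia
  · rw [LinearMap.zero_apply, coeff_zero]

lemma hasTwistedDegreesIn_zero (tw : ι → ℕ) (D : Set ℕ) :
    HasTwistedDegreesIn tw D (0 : ι → MvPolynomial σ R) :=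
  fun _ _ he => absurd (coeff_zero _) (mem_support_iff.1 he)

lemma hasTwistedDegreesIn_twistedComponent (tw : ι → ℕ) (m : ℕ) (w : ι → MvPolynomial σ R) :
    HasTwistedDegreesIn tw {m} (twistedComponent tw m w) := by
  intro j e he
  rw [mem_support_iff, coeff_twistedComponent] at he
  exact (ite_ne_right_iff.1 he).1

lemma hasTwistedDegreesIn_sub_twistedComponent (tw : ι → ℕ) (m : ℕ) (w : ι → MvPolynomial σ R) :
    HasTwistedDegreesIn tw {m}ᶜ (w - twistedComponent tw m w) := by
  intro j e he hm
  rw [mem_support_iff, Pi.sub_apply, coeff_sub, coeff_twistedComponent,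
    if_pos (Set.mem_singleton_iff.1 hm), sub_self] at he
  exact he rfl

namespace HasTwistedDegreesIn

variable {w : ι → MvPolynomial σ R}

lemma twistedComponent_eq_self (h : HasTwistedDegreesIn tw {m} w) :
    twistedComponent tw m w = w := by
  ext j e
  rw [coeff_twistedComponent, ite_eq_left_iff]
  exact fun hne => (notMem_support_iff.1 fun he => hne (h j e he)).symm

lemma twistedComponent_eq_zero (h : HasTwistedDegreesIn tw {m}ᶜ w) :
    twistedComponent tw m w = 0 := by
  ext j e
  rw [coeff_twistedComponent, Pi.zero_apply, coeff_zero, ite_eq_right_iff]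
  exact fun hm => notMem_support_iff.1 fun he => h j e he hm

lemma isHomogeneous (h : HasTwistedDegreesIn tw {m} w) (j : ι) :
    (w j).IsHomogeneous (m - tw j) := by
  intro e he
  have hdeg : e.degree + tw j = m := h j e (mem_support_iff.2 he)
  exact (congrArg (· e) Finsupp.degree_eq_weight_one).symm.trans (Nat.eq_sub_of_add_eq hdeg)

lemma eq_zero_or_isHomogeneous (h : HasTwistedDegreesIn tw {m} w) (j : ι) :
    w j = 0 ∨ (tw j ≤ m ∧ (w j).IsHomogeneous (m - tw j)) := by
  rcases eq_or_ne (w j) 0 with hj | hj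
  · exact Or.inl hj
  · obtain ⟨e, he⟩ := support_nonempty.2 hj
    have hdeg : e.degree + tw j = m := h j e he
    exact Or.inr ⟨hdeg ▸ Nat.le_add_left _ _, h.isHomogeneous j⟩

end HasTwistedDegreesIn

lemma mem_of_twistedComponent_mem [Finite ι]
    {N : Submodule (MvPolynomial σ R) (ι → MvPolynomial σ R)} {w : ι → MvPolynomial σ R}
    (h : ∀ m, twistedComponent tw m w ∈ N) : w ∈ N := by
  have := Fintype.ofFinite ι
  let degrees : Finset ℕ := Finset.univ.biUnion fun j => (w j).support.image (·.degree + tw j)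
  have hsum : ∑ m ∈ degrees, twistedComponent tw m w = w := by
    ext j e
    rw [Finset.sum_apply, coeff_sum]
    simp only [coeff_twistedComponent]
    rw [Finset.sum_ite_eq, ite_eq_left_iff]
    refine fun hm => (notMem_support_iff.1 fun he => hm ?_).symm
    exact Finset.mem_biUnion.2 ⟨j, Finset.mem_univ j, Finset.mem_image_of_mem _ he⟩
  exact hsum ▸ N.sum_mem fun m _ => h m

lemma twistedComponent_X_smul (tw : ι → ℕ) (m : ℕ) (i : σ) (w : ι → MvPolynomial σ R) :
    twistedComponent tw (m + 1) ((X i : MvPolynomial σ R) • w) =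
      (X i : MvPolynomial σ R) • twistedComponent tw m w := by
  classical
  ext j e
  simp only [coeff_twistedComponent, Pi.smul_apply, smul_eq_mul, coeff_X_mul']
  by_cases hi : i ∈ e.support
  · have hle : Finsupp.single i 1 ≤ e :=
      Finsupp.single_le_iff.2 (Nat.one_le_iff_ne_zero.2 (Finsupp.mem_support_iff.1 hi))
    have hdeg : e.degree = (e - Finsupp.single i 1).degree + 1 := by
      conv_lhs => rw [← tsub_add_cancel_of_le hle, map_add, Finsupp.degree_single]
    simp only [if_pos hi, hdeg, add_right_comm _ 1, add_left_inj]
  · simp only [if_neg hi, ite_self]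

section LinearCombination

variable [Fintype κ] {v : κ → ι → MvPolynomial σ R}

lemma HasTwistedDegreesIn.linearCombination (hv : ∀ k, HasTwistedDegreesIn tw {tw' k} (v k))
    {w : κ → MvPolynomial σ R} (hw : HasTwistedDegreesIn tw' D w) :
    HasTwistedDegreesIn tw D (Fintype.linearCombination (MvPolynomial σ R) v w) := by
  classical
  intro j e he
  rw [mem_support_iff, Fintype.linearCombination_apply, Finset.sum_apply, coeff_sum] at he
  obtain ⟨k, -, hk⟩ := Finset.exists_ne_zero_of_sum_ne_zero he
  obtain ⟨a, ha, b, hb, rfl⟩ := Finset.mem_add.1 (support_mul _ _ (mem_support_iff.2 hk))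
  have hdeg : b.degree + tw j = tw' k := hv k j b hb
  rw [map_add, add_assoc, hdeg]
  exact hw k a ha

lemma twistedComponent_linearCombination (hv : ∀ k, HasTwistedDegreesIn tw {tw' k} (v k)) (m : ℕ)
    (w : κ → MvPolynomial σ R) :
    twistedComponent tw m (Fintype.linearCombination (MvPolynomial σ R) v w) =
      Fintype.linearCombination (MvPolynomial σ R) v (twistedComponent tw' m w) := by
  have hcomp := (hasTwistedDegreesIn_twistedComponent tw' m w).linearCombination hv
  have hrest := (hasTwistedDegreesIn_sub_twistedComponent tw' m w).linearCombination hv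
  rw [← hcomp.twistedComponent_eq_self, ← sub_eq_zero, ← map_sub, ← map_sub]
  exact hrest.twistedComponent_eq_zero

end LinearCombination

lemma Koszul.boundary_twistedComponent [LinearOrder σ] [Fintype σ] (tw : ι → ℕ) (m : ℕ)
    (f : Finset σ → ι → MvPolynomial σ R) :
    Koszul.boundary (X (R := R)) (twistedComponent tw m ∘ f) =
      twistedComponent tw (m + 1) ∘ Koszul.boundary (X (R := R)) f := by
  ext1 T
  simp only [Function.comp_apply, Koszul.boundary_apply, map_sum]
  refine Finset.sum_congr rfl fun i _ => ?_
  rw [← map_zsmul, twistedComponent_X_smul]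

end GradedFree

/-! ### Syzygies and Koszul homology -/

section Irredundant

variable {R M : Type*} [Semiring R] [AddCommMonoid M] [Module R M]

lemma exists_irredundant_family {G : Set M} (hG : (Submodule.span R G).FG) :
    ∃ (p : ℕ) (v : Fin p → M), (∀ k, v k ∈ G) ∧
      Submodule.span R (Set.range v) = Submodule.span R G ∧
      ∀ k, v k ∉ Submodule.span R (v '' {k}ᶜ) := by
  classical
  have hfinite : ∃ s : Finset M, (s : Set M) ⊆ G ∧ Submodule.span R s = Submodule.span R G := by
    obtain ⟨s, hsG, hs⟩ := (Submodule.fg_span_iff_fg_span_finset_subset G).1 hG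
    exact ⟨s, hsG, hs.symm⟩
  obtain ⟨s, ⟨hsG, hs⟩, hmin⟩ := exists_minimal_of_wellFoundedLT _ hfinite
  let v : Fin s.card → M := Subtype.val ∘ s.equivFin.symm
  have hv : Function.Injective v := Subtype.val_injective.comp s.equivFin.symm.injective
  have hrange : Set.range v = s :=
    (s.equivFin.symm.surjective.range_comp Subtype.val).trans Subtype.range_coe
  refine ⟨s.card, v, fun k => hsG (s.equivFin.symm k).2, by rw [hrange, hs], fun k hk => ?_⟩
  have hvs : v k ∈ s := (s.equivFin.symm k).2
  rw [Set.image_compl_eq_range_sdiff_image hv, Set.image_singleton, hrange,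
    ← Finset.coe_erase] at hk
  have hspan : Submodule.span R (s.erase (v k) : Set M) = Submodule.span R G := by
    rw [← hs, ← Submodule.span_insert_eq_span hk, ← Finset.coe_insert, Finset.insert_erase hvs]
  have hle := hmin ⟨(Finset.coe_subset.2 (s.erase_subset _)).trans hsG, hspan⟩ (s.erase_subset _)
  exact Finset.notMem_erase _ _ (hle hvs)

end Irredundant

namespace Koszul

section CommRing

variable {σ R : Type*} [LinearOrder σ] [Fintype σ] [CommRing R]

lemma boundary_single_empty {M : Type*} [AddCommGroup M] [Module R M] (a : σ → R) (z : M) :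
    boundary a (Pi.single ∅ z : Finset σ → M) = 0 := by
  ext1 T
  rw [boundary_apply]
  refine Finset.sum_eq_zero fun i _ => ?_
  rw [Pi.single_eq_of_ne (Finset.insert_ne_empty i T), smul_zero, smul_zero]

lemma exists_boundary_eq_of_mem_ker {A B : Type*} [AddCommGroup A] [Module R A] [AddCommGroup B]
    [Module R B] {a : σ → R} {φ : A →ₗ[R] B} {w : Finset σ → A} {y : Finset σ → B}
    (hy : ∀ T, y T ∈ LinearMap.range φ) (hyw : boundary a y = φ ∘ w) :
    ∃ g : Finset σ → A, (∀ T, g T ∈ LinearMap.ker φ) ∧ boundary a g = boundary a w := by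
  choose y' hy' using hy
  obtain rfl : φ ∘ y' = y := funext hy'
  refine ⟨w - boundary a y', fun T => ?_, by rw [map_sub, boundary_boundary, sub_zero]⟩
  rw [boundary_comp] at hyw
  rw [LinearMap.mem_ker, Pi.sub_apply, map_sub, sub_eq_zero]
  exact (congrFun hyw T).symm

variable {ι κ : Type*} {tw : ι → ℕ} {tw' : κ → ℕ} {s p : ℕ}
  {N : Submodule (MvPolynomial σ R) (ι → MvPolynomial σ R)}

/-- The Koszul homology of the graded submodule `N` of `⊕ⱼ R[σ](-tw j)` with respect to the
variables vanishes in degrees larger than `s`, where the degree of a chain is that of its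
coefficients: over a field this says that the regularity of `N` is at most `s`. -/
def RegularLE (tw : ι → ℕ) (N : Submodule (MvPolynomial σ R) (ι → MvPolynomial σ R)) (s : ℕ) :
    Prop :=
  ∀ m, s < m → ∀ f : Finset σ → ι → MvPolynomial σ R, (∀ T, f T ∈ N) →
    (∀ T, HasTwistedDegreesIn tw {m} (f T)) → boundary (X (R := R)) f = 0 →
    ∃ g : Finset σ → ι → MvPolynomial σ R, (∀ T, g T ∈ N) ∧ boundary (X (R := R)) g = f

/-- The Koszul homology of `N` with respect to the variables vanishes in homological degrees at
least `p`: for graded `N` over a field this says that the projective dimension of `N` is less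
than `p`. -/
def AcyclicFrom (N : Submodule (MvPolynomial σ R) (ι → MvPolynomial σ R)) (p : ℕ) : Prop :=
  ∀ f : Finset σ → ι → MvPolynomial σ R, (∀ T, f T ∈ N) → (∀ T, T.card < p → f T = 0) →
    boundary (X (R := R)) f = 0 →
    ∃ g : Finset σ → ι → MvPolynomial σ R, (∀ T, g T ∈ N) ∧ boundary (X (R := R)) g = f

lemma acyclicFrom_card_add_one
    (N : Submodule (MvPolynomial σ R) (ι → MvPolynomial σ R)) :
    AcyclicFrom N (Fintype.card σ + 1) :=
  fun _ _ hf _ => ⟨0, fun _ => N.zero_mem, by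
    rw [map_zero]
    exact funext fun T => (hf T (Nat.lt_succ_of_le T.card_le_univ)).symm⟩

lemma AcyclicFrom.eq_bot [IsDomain R] (h : AcyclicFrom N 0) (hN : N.FG) : N = ⊥ := by
  let m : Ideal (MvPolynomial σ R) := RingHom.ker constantCoeff
  have hle : N ≤ m • N := by
    intro z hz
    obtain ⟨g, hg, hgz⟩ := h (Pi.single ∅ z)
      (fun T => by rw [Pi.single_apply]; split_ifs; exacts [hz, N.zero_mem])
      (fun T hT => absurd hT (Nat.not_lt_zero _)) (boundary_single_empty _ z)
    rw [← Pi.single_eq_same (M := fun _ : Finset σ => ι → MvPolynomial σ R) ∅ z, ← hgz,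
      boundary_apply]
    exact Submodule.sum_mem _ fun i _ =>
      Submodule.smul_mem_smul (constantCoeff_X R i) (zsmul_mem (hg _) _)
  obtain ⟨r, hr, hrN⟩ := Submodule.exists_sub_one_mem_and_smul_eq_zero_of_fg_of_le_smul m N hN hle
  have hr0 : r ≠ 0 := by
    rintro rfl
    simp [m] at hr
  exact (Submodule.eq_bot_iff N).2 fun z hz => (smul_eq_zero.1 (hrN z hz)).resolve_left hr0

lemma RegularLE.span_homogeneous_eq [Finite ι] (h : RegularLE tw N s)
    (hN : ∀ w ∈ N, ∀ m, twistedComponent tw m w ∈ N) :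
    Submodule.span (MvPolynomial σ R) {w | w ∈ N ∧ ∃ t ≤ s, HasTwistedDegreesIn tw {t} w} = N := by
  refine le_antisymm (Submodule.span_le.2 fun w hw => hw.1) fun z hz => ?_
  suffices hhom : ∀ m, ∀ z ∈ N, HasTwistedDegreesIn tw {m} z → z ∈ Submodule.span
      (MvPolynomial σ R) {w | w ∈ N ∧ ∃ t ≤ s, HasTwistedDegreesIn tw {t} w} from
    mem_of_twistedComponent_mem fun m =>
      hhom m _ (hN z hz m) (hasTwistedDegreesIn_twistedComponent tw m z)
  intro m
  induction m with
  | zero => exact fun z hz hdeg => Submodule.subset_span ⟨hz, 0, s.zero_le, hdeg⟩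
  | succ m ih =>
    intro z hz hdeg
    by_cases hs : m + 1 ≤ s
    · exact Submodule.subset_span ⟨hz, m + 1, hs, hdeg⟩
    obtain ⟨g, hg, hgz⟩ := h (m + 1) (not_le.1 hs) (Pi.single ∅ z)
      (fun T => by rw [Pi.single_apply]; split_ifs; exacts [hz, N.zero_mem])
      (fun T => by
        rw [Pi.single_apply]; split_ifs; exacts [hdeg, hasTwistedDegreesIn_zero tw _])
      (boundary_single_empty _ z)
    have hcomp := congrFun (boundary_twistedComponent tw m g) ∅
    rw [hgz, Function.comp_apply, Pi.single_eq_same, hdeg.twistedComponent_eq_self,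
      boundary_apply] at hcomp
    rw [← hcomp]
    exact Submodule.sum_mem _ fun i _ => Submodule.smul_mem _ _ (zsmul_mem
      (ih _ (hN _ (hg _) m) (hasTwistedDegreesIn_twistedComponent tw m _)) _)

variable [Fintype κ] {v : κ → ι → MvPolynomial σ R}

lemma RegularLE.ker_linearCombination (h : RegularLE tw N s)
    (hv : ∀ k, HasTwistedDegreesIn tw {tw' k} (v k))
    (hspan : Submodule.span (MvPolynomial σ R) (Set.range v) = N)
    (hrel : ∀ w, Fintype.linearCombination (MvPolynomial σ R) v w = 0 → ∀ k, coeff 0 (w k) = 0) :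
    RegularLE tw' (LinearMap.ker (Fintype.linearCombination (MvPolynomial σ R) v)) (s + 1) := by
  set φ := Fintype.linearCombination (MvPolynomial σ R) v with hφ
  have hrange : LinearMap.range φ = N := by rw [hφ, Fintype.range_linearCombination, hspan]
  intro m hm z hz hdeg hd
  obtain ⟨m, rfl⟩ : ∃ m', m = m' + 1 := Nat.exists_eq_add_one.2 (by lia)
  obtain ⟨w, -, hw⟩ := exists_boundary_eq_of_coeff_zero_eq_zero_pi (p := 0)
    (fun T hT => absurd hT (Nat.not_lt_zero _)) hd (hrel _ (hz ∅))
  have hwz : boundary (X (R := R)) (twistedComponent tw' m ∘ w) = z := by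
    rw [boundary_twistedComponent, hw]
    exact funext fun T => (hdeg T).twistedComponent_eq_self
  obtain ⟨y, hy, hyw⟩ := h m (by lia) (φ ∘ twistedComponent tw' m ∘ w)
    (fun T => hrange ▸ LinearMap.mem_range_self φ _)
    (fun T => (hasTwistedDegreesIn_twistedComponent tw' m (w T)).linearCombination hv)
    (by rw [boundary_comp, hwz]; exact funext hz)
  rw [← hrange] at hy
  obtain ⟨g, hg, hgw⟩ := exists_boundary_eq_of_mem_ker hy hyw
  exact ⟨g, hg, hgw.trans hwz⟩

lemma AcyclicFrom.ker_linearCombination (h : AcyclicFrom N p)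
    (hspan : Submodule.span (MvPolynomial σ R) (Set.range v) = N)
    (hrel : ∀ w, Fintype.linearCombination (MvPolynomial σ R) v w = 0 → ∀ k, coeff 0 (w k) = 0) :
    AcyclicFrom (LinearMap.ker (Fintype.linearCombination (MvPolynomial σ R) v)) (p - 1) := by
  set φ := Fintype.linearCombination (MvPolynomial σ R) v with hφ
  have hrange : LinearMap.range φ = N := by rw [hφ, Fintype.range_linearCombination, hspan]
  intro z hz hzp hd
  obtain ⟨w, hwp, rfl⟩ := exists_boundary_eq_of_coeff_zero_eq_zero_pi hzp hd (hrel _ (hz ∅))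
  obtain ⟨y, hy, hyw⟩ := h (φ ∘ w) (fun T => hrange ▸ LinearMap.mem_range_self φ _)
    (fun T hT => by rw [Function.comp_apply, hwp T (by lia), map_zero])
    (by rw [boundary_comp]; exact funext hz)
  rw [← hrange] at hy
  exact exists_boundary_eq_of_mem_ker hy hyw

end CommRing

lemma coeff_zero_eq_zero_of_irredundant {σ K ι κ : Type*} [Field K] [Fintype κ] {tw : ι → ℕ}
    {tw' : κ → ℕ} {v : κ → ι → MvPolynomial σ K}
    (hv : ∀ k, HasTwistedDegreesIn tw {tw' k} (v k)) {w : κ → MvPolynomial σ K}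
    (hw : Fintype.linearCombination (MvPolynomial σ K) v w = 0) {k : κ}
    (hk : v k ∉ Submodule.span (MvPolynomial σ K) (v '' {k}ᶜ)) : coeff 0 (w k) = 0 := by
  classical
  contrapose! hk
  set c := coeff 0 (w k)
  have hcomp : twistedComponent tw' (tw' k) w k = C c := by
    ext e
    rw [coeff_twistedComponent, coeff_C]
    simp only [Nat.add_eq_right, Finsupp.degree_eq_zero_iff, eq_comm (a := e)]
    split_ifs with he
    exacts [he ▸ rfl, rfl]
  have hrel := twistedComponent_linearCombination hv (tw' k) w
  rw [hw, map_zero, Fintype.linearCombination_apply, Fintype.sum_eq_add_sum_compl k, hcomp,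
    eq_comm, add_eq_zero_iff_eq_neg] at hrel
  have hunit : IsUnit (C c : MvPolynomial σ K) := (IsUnit.mk0 c hk).map C
  rw [← Submodule.smul_mem_iff_of_isUnit _ hunit, hrel]
  refine neg_mem (Submodule.sum_mem _ fun l hl => Submodule.smul_mem _ _ ?_)
  exact Submodule.subset_span ⟨l, by simpa using hl, rfl⟩

end Koszul

/-! ### Construction of the resolution -/

/-- A graded submodule `N` of `⊕ⱼ K[x₁,…,xₙ](-tw j)` with regularity at most `s` and projective
dimension less than `p`; the syzygy modules of a minimal resolution are of this kind. -/
structure SyzygyModule (n : ℕ) (K : Type*) [Field K] (s p : ℕ) where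
  rank : ℕ
  tw : Fin rank → ℕ
  N : Submodule (MvPolynomial (Fin n) K) (Fin rank → MvPolynomial (Fin n) K)
  twistedComponent_mem : ∀ w ∈ N, ∀ m, twistedComponent tw m w ∈ N
  regularLE : Koszul.RegularLE tw N s
  acyclicFrom : Koszul.AcyclicFrom N p

namespace SyzygyModule

variable {n : ℕ} {K : Type*} [Field K] {s p : ℕ}

/-- One step of the resolution: `v` is a family of homogeneous generators of `S.N`, of degrees at
most `s`, whose module of relations is `S'.N`. -/
structure IsPresentation (S : SyzygyModule n K s p) {s' p' : ℕ} (S' : SyzygyModule n K s' p')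
    (v : Fin S'.rank → Fin S.rank → MvPolynomial (Fin n) K) : Prop where
  homogeneous : ∀ k, HasTwistedDegreesIn S.tw {S'.tw k} (v k)
  range_eq : LinearMap.range (Fintype.linearCombination (MvPolynomial (Fin n) K) v) = S.N
  ker_eq : LinearMap.ker (Fintype.linearCombination (MvPolynomial (Fin n) K) v) = S'.N
  tw_le : ∀ k, S'.tw k ≤ s
  rank_eq_zero : S.N = ⊥ → S'.rank = 0

lemma exists_isPresentation (S : SyzygyModule n K s p) :
    ∃ (S' : SyzygyModule n K (s + 1) (p - 1))
      (v : Fin S'.rank → Fin S.rank → MvPolynomial (Fin n) K), S.IsPresentation S' v := by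
  have hgen := S.regularLE.span_homogeneous_eq S.twistedComponent_mem
  obtain ⟨r, v, hv, hspan, hirred⟩ :=
    exists_irredundant_family (hgen.symm ▸ IsNoetherian.noetherian S.N)
  rw [hgen] at hspan
  choose hvN t hts hdeg using hv
  have hrel w (hw : Fintype.linearCombination (MvPolynomial (Fin n) K) v w = 0) (k) :
      coeff 0 (w k) = 0 :=
    Koszul.coeff_zero_eq_zero_of_irredundant hdeg hw (hirred k)
  refine ⟨⟨r, t, LinearMap.ker (Fintype.linearCombination (MvPolynomial (Fin n) K) v),
    fun w hw m => ?_, S.regularLE.ker_linearCombination hdeg hspan hrel,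
    S.acyclicFrom.ker_linearCombination hspan hrel⟩, v, hdeg, ?_, rfl, hts, fun hbot => ?_⟩
  · rw [LinearMap.mem_ker] at hw ⊢
    rw [← twistedComponent_linearCombination hdeg, hw, map_zero]
  · rw [Fintype.range_linearCombination, hspan]
  · refine Nat.eq_zero_of_not_pos fun hr => hirred ⟨0, hr⟩ ?_
    have hzero : v ⟨0, hr⟩ = 0 := (Submodule.mem_bot _).1 (hbot ▸ hvN ⟨0, hr⟩)
    exact hzero ▸ Submodule.zero_mem _

/-- The iterated syzygy modules of `S`. -/
noncomputable def iterate (S : SyzygyModule n K s p) :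
    (i : ℕ) → SyzygyModule n K (s + i) (p - i)
  | 0 => S
  | i + 1 => (S.iterate i).exists_isPresentation.choose

lemma exists_isPresentation_iterate (S : SyzygyModule n K s p) (i : ℕ) :
    ∃ v, (S.iterate i).IsPresentation (S.iterate (i + 1)) v :=
  (S.iterate i).exists_isPresentation.choose_spec

lemma rank_iterate_eq_zero (S : SyzygyModule n K s p) {i : ℕ} (hi : p < i) :
    (S.iterate i).rank = 0 := by
  obtain ⟨i, rfl⟩ := Nat.exists_eq_add_one.2 (Nat.zero_lt_of_lt hi)
  obtain ⟨v, hv⟩ := S.exists_isPresentation_iterate i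
  have hacyclic : Koszul.AcyclicFrom (S.iterate i).N 0 := by
    simpa only [Nat.sub_eq_zero_of_le (Nat.le_of_lt_succ hi)] using (S.iterate i).acyclicFrom
  exact hv.rank_eq_zero (hacyclic.eq_bot (IsNoetherian.noetherian _))

end SyzygyModule

/-- The ideal `J` as a submodule of the free module of rank one, the first module resolved. -/
def rankOneSubmodule {A : Type*} [CommRing A] (J : Ideal A) : Submodule A (Fin 1 → A) :=
  Submodule.comap (LinearEquiv.funUnique (Fin 1) A A).toLinearMap J

theorem exists_gfr_of_regularLE {n : ℕ} {K : Type} [Field K] {J : Ideal (MvPolynomial (Fin n) K)}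
    {d : ℕ} (hJ : ∀ f ∈ J, ∀ m, homogeneousComponent m f ∈ J)
    (hreg : Koszul.RegularLE 0 (rankOneSubmodule J) d) :
    ∃ F : GFR n K J, ∀ (i : ℕ) (j : Fin (F.rk i)), F.tw i j ≤ d - 1 + i := by
  let S : SyzygyModule n K d (n + 1) :=
    { rank := 1
      tw := 0
      N := rankOneSubmodule J
      twistedComponent_mem := fun w hw m => by
        simpa [twistedComponent, rankOneSubmodule] using hJ _ hw m
      regularLE := hreg
      acyclicFrom := by simpa using Koszul.acyclicFrom_card_add_one (rankOneSubmodule J) }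
  choose v hv using S.exists_isPresentation_iterate
  refine ⟨{ len := n + 1
            rk := fun i => (S.iterate i).rank
            rk_zero := fun i hi => S.rank_iterate_eq_zero hi
            tw := fun i => (S.iterate i).tw
            δ := fun i => Fintype.linearCombination (MvPolynomial (Fin n) K) (v i)
            δ_homog := fun i k j => ?_
            aug := (LinearEquiv.funUnique (Fin 1) _ (MvPolynomial (Fin n) K)).toLinearMap
            aug_homog := fun j => ?_
            aug_surj := fun r => ⟨fun _ => r, ?_⟩
            exact_zero := (hv 0).range_eq
            exact_succ := fun i => (hv (i + 1)).range_eq.trans (hv i).ker_eq.symm }, ?_⟩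
  · rw [Fintype.linearCombination_apply_single, one_smul]
    exact ((hv i).homogeneous k).eq_zero_or_isHomogeneous j
  · rw [Subsingleton.elim (α := Fin 1) j 0]
    exact isHomogeneous_one _ _
  · exact (sub_self r).symm ▸ J.zero_mem
  · rintro (_ | i) j
    · exact Nat.zero_le _
    · have := (hv i).tw_le j
      dsimp only
      lia

/-! ### The first syzygies bound the minimal covers -/

namespace GFR

variable {n : ℕ} {K : Type} [Field K] {I : Ideal (MvPolynomial (Fin n) K)} (F : GFR n K I)

lemma isHomogeneous_aug_δ (k : Fin (F.rk 1)) :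
    (F.aug (F.δ 0 (Pi.single k 1))).IsHomogeneous (F.tw 1 k) := by
  rw [pi_eq_sum_univ' (F.δ 0 (Pi.single k 1)), map_sum]
  refine IsHomogeneous.sum _ _ _ fun j _ => ?_
  rw [map_smul, smul_eq_mul]
  rcases F.δ_homog 0 k j with hzero | ⟨hle, hhom⟩
  · rw [hzero, zero_mul]
    exact isHomogeneous_zero _ _ _
  · exact Nat.sub_add_cancel hle ▸ hhom.mul (F.aug_homog j)

lemma mul_aug_mem_span {d : ℕ} (hF : ∀ k, F.tw 1 k ≤ d) {f : MvPolynomial (Fin n) K} (hf : f ∈ I)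
    (y : Fin (F.rk 0) → MvPolynomial (Fin n) K) :
    f * F.aug y ∈ Ideal.span {g | g ∈ I ∧ ∃ m ≤ d, g.IsHomogeneous m} := by
  have hfy : f • y ∈ LinearMap.range (F.δ 0) := by
    rw [F.exact_zero, Submodule.mem_comap, map_smul]
    exact I.mul_mem_right _ hf
  obtain ⟨w, hw⟩ := hfy
  rw [← smul_eq_mul, ← map_smul, ← hw, pi_eq_sum_univ' w, map_sum, map_sum]
  refine Ideal.sum_mem _ fun k _ => ?_
  rw [map_smul, map_smul]
  refine Ideal.mul_mem_left _ _ (Ideal.subset_span ⟨?_, F.tw 1 k, hF k, F.isHomogeneous_aug_δ k⟩)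
  rw [← Submodule.mem_comap, ← F.exact_zero]
  exact LinearMap.mem_range_self _ _

end GFR

lemma exists_coeff_ne_zero_of_mem_span {σ R : Type*} [CommSemiring R]
    {G : Set (MvPolynomial σ R)} {f : MvPolynomial σ R} (hf : f ∈ Ideal.span G) {e : σ →₀ ℕ}
    (he : coeff e f ≠ 0) : ∃ g ∈ G, ∃ e' ≤ e, coeff e' g ≠ 0 := by
  classical
  induction hf using Submodule.span_induction generalizing e with
  | mem g hg => exact ⟨g, hg, e, le_rfl, he⟩
  | zero => exact absurd (coeff_zero e) he
  | add p q _ _ hp hq =>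
    by_cases hpe : coeff e p = 0
    · exact hq (by rwa [coeff_add, hpe, zero_add] at he)
    · exact hp hpe
  | smul a p _ hp =>
    rw [smul_eq_mul, coeff_mul] at he
    obtain ⟨⟨e₁, e₂⟩, hsum, hne⟩ := Finset.exists_ne_zero_of_sum_ne_zero he
    obtain ⟨g, hg, e', he', hge'⟩ := hp (right_ne_zero_of_mul hne)
    have he₂ : e₂ ≤ e := Finset.HasAntidiagonal.mem_antidiagonal.1 hsum ▸ le_add_self
    exact ⟨g, hg, e', he'.trans he₂, hge'⟩

namespace Clutter

variable {n : ℕ} {K : Type} [Field K] {C : Clutter n} {d : ℕ}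

lemma IsMinCover.card_le_of_mem_span {S : Finset (Fin n)} (hS : C.IsMinCover S)
    {f : MvPolynomial (Fin n) K}
    (hf : f ∈ Ideal.span {g | g ∈ C.coverIdeal K ∧ ∃ m ≤ d, g.IsHomogeneous m})
    (hfS : coeff (squarefreeExponent S) f ≠ 0) : S.card ≤ d := by
  obtain ⟨g, ⟨hgC, m, hm, hg⟩, e, he, hge⟩ := exists_coeff_ne_zero_of_mem_span hf hfS
  have hsupport : e.support = S :=
    hS.2 _ (mem_coverIdeal.1 hgC e (mem_support_iff.2 hge))
      ((Finsupp.support_mono he).trans (support_squarefreeExponent S).subset)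
  have hsq : e = squarefreeExponent S :=
    le_antisymm he (squarefreeExponent_le_iff.2 hsupport.ge)
  have hdegree : e.degree = m := not_imp_comm.1 hg.coeff_eq_zero hge
  rw [← degree_squarefreeExponent S, ← hsq, hdegree]
  exact hm

lemma alpha0'_le_of_tw_one_le (F : GFR n K (C.coverIdeal K)) (hF : ∀ k, F.tw 1 k ≤ d) :
    alpha0' C ≤ d := by
  refine csSup_le' ?_
  rintro _ ⟨S, hS, rfl⟩
  obtain ⟨y, hy⟩ := F.aug_surj 1
  rcases S.eq_empty_or_nonempty with rfl | hne
  · exact Nat.zero_le _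
  have hunit : coeff 0 (1 - F.aug y) = 0 := by
    by_contra h0
    have hempty := hS.2 _ (mem_coverIdeal.1 hy 0 (mem_support_iff.2 h0)) (by simp)
    exact hne.ne_empty (by simpa using hempty.symm)
  have hmonomial : monomial (squarefreeExponent S) (1 : K) ∈ C.coverIdeal K :=
    Ideal.subset_span ⟨S, hS.1, edgeMonomial_eq_monomial S⟩
  refine hS.card_le_of_mem_span (F.mul_aug_mem_span hF hmonomial y) ?_
  rw [coeff_sub, coeff_zero_one, sub_eq_zero] at hunit
  rw [coeff_monomial_mul', if_pos le_rfl, tsub_self, ← hunit, one_mul]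
  exact one_ne_zero

lemma homogeneousComponent_mem_coverIdeal {f : MvPolynomial (Fin n) K} (hf : f ∈ C.coverIdeal K)
    (m : ℕ) : homogeneousComponent m f ∈ C.coverIdeal K := by
  refine mem_coverIdeal.2 fun e he => mem_coverIdeal.1 hf e ?_
  rw [mem_support_iff, coeff_homogeneousComponent] at he
  exact mem_support_iff.2 (ite_ne_right_iff.1 he).2

lemma regularLE_coverIdeal
    (h : Koszul.ExactBelow (fun i : Fin n => (X i ^ 2 : MvPolynomial (Fin n) K))
      (MvPolynomial (Fin n) K ⧸ C.edgeIdeal K) (n - d)) :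
    Koszul.RegularLE 0 (rankOneSubmodule (C.coverIdeal K)) d := by
  intro m hm f hf hdeg hd
  let φ := LinearEquiv.funUnique (Fin 1) (MvPolynomial (Fin n) K) (MvPolynomial (Fin n) K)
  obtain ⟨g, hg, hgf⟩ := h.exists_boundary_eq_of_mem_coverIdeal hm (f := φ.toLinearMap ∘ f) hf
    (fun T => (hdeg T).isHomogeneous 0)
    (by rw [Koszul.boundary_comp, hd]; exact funext fun _ => φ.map_zero)
  refine ⟨φ.symm.toLinearMap ∘ g, hg, ?_⟩
  rw [Koszul.boundary_comp, hgf]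
  exact funext fun T => φ.symm_apply_apply (f T)

theorem exists_gfr_coverIdeal
    (h : Koszul.ExactBelow (fun i : Fin n => (X i ^ 2 : MvPolynomial (Fin n) K))
      (MvPolynomial (Fin n) K ⧸ C.edgeIdeal K) (n - d)) :
    ∃ F : GFR n K (C.coverIdeal K), ∀ (i : ℕ) (j : Fin (F.rk i)), F.tw i j ≤ d - 1 + i :=
  exists_gfr_of_regularLE (fun _ hf m => homogeneousComponent_mem_coverIdeal hf m)
    (regularLE_coverIdeal h)

end Clutter

/-- For a clutter `C`, `reg(R/I_c(C)) ≥ α₀'(C) - 1`, where `α₀'(C)` is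
the cardinality of a largest minimal vertex cover, with equality if `R/I(C)` is
sequentially Cohen–Macaulay. -/
theorem stmt_12 (K : Type) [Field K] {n : ℕ} (C : Clutter n) :
    alpha0' C - 1 ≤ regR (C.coverIdeal K) ∧
    (IsSeqCM K (C.edgeIdeal K) → regR (C.coverIdeal K) = alpha0' C - 1) := by
  have lower : alpha0' C - 1 ≤ regR (C.coverIdeal K) := by
    have hexact := Koszul.exactBelow_zero (M := MvPolynomial (Fin n) K ⧸ C.edgeIdeal K)
      fun i : Fin n => (X i ^ 2 : MvPolynomial (Fin n) K)
    have hfinite : {r : ℕ | ∃ F : GFR n K (C.coverIdeal K),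
        ∀ (i : ℕ) (j : Fin (F.rk i)), F.tw i j ≤ r + i}.Nonempty :=
      ⟨n - 1, Clutter.exists_gfr_coverIdeal ((Nat.sub_self n).symm ▸ hexact)⟩
    obtain ⟨F, hF⟩ := Nat.sInf_mem hfinite
    exact Nat.sub_le_of_le_add (Clutter.alpha0'_le_of_tw_one_le F (hF 1))
  exact ⟨lower, fun h => le_antisymm
    (Nat.sInf_le (Clutter.exists_gfr_coverIdeal (C.exactBelow_sq_of_isSeqCM h))) lower⟩
end

section
/- Let G be a bipartite graph without isolated vertices on n vertices, with edge ideal I(G) ⊂ R = K[x_1,...,x_n]. Then depth(R/I(G)) ≤ floor(n/2). -/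
open MvPolynomial

/-- The edge ideal of a (simple) graph, in `K[x_v : v ∈ V]`. -/
noncomputable def graphIdeal (K : Type) [Field K] {V : Type} (G : SimpleGraph V) :
    Ideal (MvPolynomial V K) :=
  Ideal.span { m : MvPolynomial V K | ∃ u v : V, G.Adj u v ∧ m = X u * X v }

/-- A graph is bipartite if its vertex set splits into two parts such that every edge
joins the two parts. -/
def SimpleGraph.IsBipartiteGraph {V : Type} (G : SimpleGraph V) : Prop :=
  ∃ A : Set V, ∀ u v : V, G.Adj u v → (u ∈ A ↔ v ∉ A)

/-!
If `P` is an associated prime of `M`, then an `M`-regular sequence inside a prime `m ⊇ P` has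
length at most `dim R/P`: passing from `M` to `M/rM` replaces `P` by a strictly larger associated
prime that is still contained in `m`. For a maximal independent set `s` of `G`, the ideal `P_s`
generated by the variables outside `s` is `I(G) : ∏_{i ∈ s} x_i`, hence an associated prime of
`R/I(G)`, and `dim R/P_s = |s|`. When `G` is bipartite without isolated vertices, both parts are
maximal independent sets, and the smaller one has at most `n/2` elements.
-/

section RegularSequences

theorem isAssociatedPrime_quotient_of_colon_eq {R : Type*} [CommRing R] {I P : Ideal R}
    [hP : P.IsPrime] {f : R} (hf : I.colon {f} = P) : IsAssociatedPrime P (R ⧸ I) := by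
  refine ⟨hP, Ideal.Quotient.mk I f, ?_⟩
  rw [← hP.radical, ← hf]
  congr 1
  ext g
  rw [Submodule.mem_colon_singleton, Submodule.mem_colon_singleton, Submodule.mem_bot,
    ← Ideal.Quotient.mk_eq_mk, ← Submodule.Quotient.mk_smul, Submodule.Quotient.mk_eq_zero]

variable {R M : Type*} [CommRing R] [AddCommGroup M] [Module R M]

theorem isSMulRegular_quotient_torsionBySet {r : R} (hr : IsSMulRegular M r) (s : Set R) :
    IsSMulRegular (M ⧸ Submodule.torsionBySet R M s) r := by
  rw [isSMulRegular_quotient_iff_mem_of_smul_mem]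
  simp only [Submodule.mem_torsionBySet_iff]
  exact fun x hx a ↦ hr.right_eq_zero_of_smul (by rw [smul_comm, hx a])

theorem quotSMulTop_map_subtype_injective {r : R} {N : Submodule R M}
    (hr : IsSMulRegular (M ⧸ N) r) : Function.Injective (QuotSMulTop.map r N.subtype) := by
  have hexact := QuotSMulTop.map_first_exact_on_four_term_exact_of_isSMulRegular_last (r := r)
    (f₁ := (0 : N →ₗ[R] N)) (f₂ := N.subtype) (f₃ := N.mkQ)
    ((LinearMap.exact_zero_iff_injective _ _).2 N.injective_subtype)
    (LinearMap.exact_subtype_mkQ N) hr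
  rw [← LinearMap.ker_eq_bot, hexact.linearMap_ker_eq, LinearMap.range_eq_bot]
  ext x
  simp

theorem mem_support_torsionBySet_of_isAssociatedPrime [IsNoetherianRing R] {P : Ideal R}
    (hP : IsAssociatedPrime P M) {p : PrimeSpectrum R} (hPp : P ≤ p.asIdeal) :
    p ∈ Module.support R (Submodule.torsionBySet R M (P : Set R)) := by
  obtain ⟨-, x, rfl⟩ := isAssociatedPrime_iff.1 hP
  simp only [Module.mem_support_iff_exists_annihilator]
  refine ⟨⟨x, ?_⟩, fun a ha ↦ hPp ?_⟩
  · rw [Submodule.mem_torsionBySet_iff]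
    rintro ⟨a, ha⟩
    simpa [Submodule.mem_colon_singleton] using ha
  · simpa [Submodule.mem_annihilator_span_singleton, Submodule.mem_colon_singleton,
      Subtype.ext_iff] using ha

theorem exists_isAssociatedPrime_le_of_mem_support [IsNoetherianRing R] [Module.Finite R M]
    {p : PrimeSpectrum R} (hp : p ∈ Module.support R M) :
    ∃ Q, IsAssociatedPrime Q M ∧ Q ≤ p.asIdeal := by
  obtain ⟨Q, hQ, hQp⟩ := Ideal.exists_minimalPrimes_le (Module.mem_support_iff_of_finite.1 hp)
  exact ⟨Q, Module.associatedPrimes.minimalPrimes_annihilator_subset_associatedPrimes R M hQ, hQp⟩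

theorem notMem_of_isAssociatedPrime_of_isSMulRegular [IsNoetherianRing R] {P : Ideal R}
    (hP : IsAssociatedPrime P M) {r : R} (hr : IsSMulRegular M r) : r ∉ P := fun hrP ↦ by
  have hr_compl := (biUnion_associatedPrimes_eq_compl_regular R M).subset (Set.mem_biUnion hP hrP)
  exact hr_compl hr

theorem exists_isAssociatedPrime_quotSMulTop_gt [IsNoetherianRing R] [Module.Finite R M]
    {P m : Ideal R} [m.IsPrime] (hP : IsAssociatedPrime P M) (hPm : P ≤ m) {r : R} (hrm : r ∈ m)
    (hr : IsSMulRegular M r) :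
    ∃ Q, IsAssociatedPrime Q (QuotSMulTop r M) ∧ P < Q ∧ Q ≤ m := by
  -- Any associated prime of `N / rN` contains both `P` and `r`, and `N / rN` embeds in `M / rM`.
  let N := Submodule.torsionBySet R M (P : Set R)
  have hm : (⟨m, ‹_›⟩ : PrimeSpectrum R) ∈ Module.support R (QuotSMulTop r N) := by
    rw [Module.support_quotSMulTop]
    exact ⟨mem_support_torsionBySet_of_isAssociatedPrime hP hPm, by simpa using hrm⟩
  obtain ⟨Q, hQ, hQm⟩ := exists_isAssociatedPrime_le_of_mem_support hm
  have hannQ : Module.annihilator R (QuotSMulTop r N) ≤ Q := by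
    simpa only [Submodule.annihilator_top] using hQ.annihilator_le
  have hPQ : P ≤ Q := fun a ha ↦ hannQ <| by
    have haN : a ∈ Module.annihilator R N := Module.mem_annihilator.2 fun y ↦
      Subtype.ext ((Submodule.mem_torsionBySet_iff _ _).1 y.2 ⟨a, ha⟩)
    exact LinearMap.annihilator_le_of_surjective _ (Submodule.mkQ_surjective _) haN
  have hrQ : r ∈ Q := hannQ (QuotSMulTop.mem_annihilator N r)
  refine ⟨Q, hQ.map_of_injective _ (quotSMulTop_map_subtype_injective
    (isSMulRegular_quotient_torsionBySet hr _)), hPQ.lt_of_ne ?_, hQm⟩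
  rintro rfl
  exact notMem_of_isAssociatedPrime_of_isSMulRegular hP hr hrQ

theorem ringKrullDim_quotient_add_one_le_of_lt {P Q : Ideal R} [P.IsPrime] (hPQ : P < Q) :
    ringKrullDim (R ⧸ Q) + 1 ≤ ringKrullDim (R ⧸ P) := by
  obtain ⟨r, hrQ, hrP⟩ := Set.exists_of_ssubset hPQ
  refine ringKrullDim_succ_le_of_surjective (Ideal.Quotient.factor hPQ.le)
    (Ideal.Quotient.factor_surjective hPQ.le) (r := Ideal.Quotient.mk P r) ?_ ?_
  · simpa [mem_nonZeroDivisors_iff_ne_zero, Ideal.Quotient.eq_zero_iff_mem] using hrP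
  · simpa [Ideal.Quotient.eq_zero_iff_mem] using hrQ

theorem length_le_ringKrullDim_quotient_of_isAssociatedPrime [IsNoetherianRing R]
    [Module.Finite R M] {P m : Ideal R} [m.IsPrime] (hP : IsAssociatedPrime P M) (hPm : P ≤ m)
    {rs : List R} (hrs : ∀ r ∈ rs, r ∈ m) (hreg : RingTheory.Sequence.IsWeaklyRegular M rs) :
    (rs.length : WithBot ℕ∞) ≤ ringKrullDim (R ⧸ P) := by
  have := hP.isPrime
  induction rs generalizing M P with
  | nil => simpa using ringKrullDim_nonneg_of_nontrivial
  | cons r rs ih =>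
    obtain ⟨hr, hreg⟩ := (RingTheory.Sequence.isWeaklyRegular_cons_iff M r rs).1 hreg
    rw [List.forall_mem_cons] at hrs
    obtain ⟨Q, hQ, hPQ, hQm⟩ := exists_isAssociatedPrime_quotSMulTop_gt hP hPm hrs.1 hr
    calc ((r :: rs).length : WithBot ℕ∞) = rs.length + 1 := by simp
      _ ≤ ringKrullDim (R ⧸ Q) + 1 := by gcongr; exact ih hQ hQm hrs.2 hreg hQ.isPrime
      _ ≤ ringKrullDim (R ⧸ P) := ringKrullDim_quotient_add_one_le_of_lt hPQ

end RegularSequences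

section VariableIdeals

variable {σ R : Type*} [CommRing R]

theorem ker_killCompl_subtype_val (s : Set σ) :
    RingHom.ker (killCompl (R := R) (Subtype.val_injective (p := (· ∈ s)))) =
      Ideal.span (X '' sᶜ) := by
  ext p
  rw [RingHom.mem_ker, ← MvPolynomial.support_eq_empty, support_killCompl,
    mem_ideal_span_X_image, ← Finset.coe_eq_empty, Finset.coe_preimage,
    Set.preimage_eq_empty_iff, Set.disjoint_left]
  simp [Finsupp.mem_range_mapDomain_iff _ Subtype.val_injective]

theorem isPrime_span_X_image [IsDomain R] (s : Set σ) :
    (Ideal.span (X '' s : Set (MvPolynomial σ R))).IsPrime := by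
  rw [← compl_compl s, ← ker_killCompl_subtype_val]
  exact RingHom.ker_isPrime _

theorem X_mem_span_X_image [Nontrivial R] {s : Set σ} {i : σ} :
    (X i : MvPolynomial σ R) ∈ Ideal.span (X '' s) ↔ i ∈ s := by
  simp [mem_ideal_span_X_image, support_X, Finsupp.single_apply_eq_zero]

theorem ringKrullDim_quotient_span_X_image_compl [IsNoetherianRing R] {s : Set σ} [Finite s] :
    ringKrullDim (MvPolynomial σ R ⧸ Ideal.span (X '' sᶜ : Set (MvPolynomial σ R))) =
      ringKrullDim R + s.ncard := by
  rw [← ker_killCompl_subtype_val, ← Nat.card_coe_set_eq, ← ringKrullDim_of_isNoetherianRing]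
  exact ringKrullDim_eq_of_ringEquiv (RingHom.quotientKerEquivOfRightInverse
    (killCompl_rename_app Subtype.val_injective))

end VariableIdeals

section IndependentSets

variable {V : Type*} {G : SimpleGraph V}

theorem exists_adj_mem_of_maximal_isIndepSet {s : Set V} (hs : Maximal G.IsIndepSet s)
    {v : V} (hv : v ∉ s) : ∃ u ∈ s, G.Adj v u := by
  by_contra! h
  have hinsert : G.IsIndepSet (insert v s) :=
    hs.1.insert fun u hu _ ↦ ⟨h u hu, fun huv ↦ h u hu huv.symm⟩
  exact hv (hs.2 hinsert (Set.subset_insert v s) (Set.mem_insert v s))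

theorem maximal_isIndepSet_of_isBipartiteWith {s t : Set V} (h : G.IsBipartiteWith s t)
    (hniso : ∀ v, ∃ u, G.Adj v u) : Maximal G.IsIndepSet s := by
  have hnot : ∀ v ∈ s, v ∉ t := fun v hs ht ↦ h.disjoint.notMem_of_mem_left hs ht
  refine ⟨fun u hu v hv _ huv ↦ ?_, fun T hT hsT v hv ↦ ?_⟩
  · rcases h.mem_of_adj huv with ⟨-, hvt⟩ | ⟨hut, -⟩
    · exact hnot v hv hvt
    · exact hnot u hu hut
  · obtain ⟨u, huv⟩ := hniso v
    rcases h.mem_of_adj huv with ⟨hvs, -⟩ | ⟨-, hus⟩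
    · exact hvs
    · exact absurd huv (hT hv (hsT hus) huv.ne)

end IndependentSets

section EdgeIdeals

variable (K : Type) [Field K] {V : Type} {G : SimpleGraph V}

theorem graphIdeal_le_span_X_image_compl {s : Set V} (hs : G.IsIndepSet s) :
    graphIdeal K G ≤ Ideal.span (X '' sᶜ) := by
  refine Ideal.span_le.2 ?_
  rintro _ ⟨u, v, huv, rfl⟩
  by_cases hu : u ∈ s
  · exact Ideal.mul_mem_left _ _ (Ideal.subset_span ⟨v, fun hv ↦ hs hu hv huv.ne huv, rfl⟩)
  · exact Ideal.mul_mem_right _ _ (Ideal.subset_span ⟨u, hu, rfl⟩)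

theorem colon_graphIdeal_prod_X {s : Finset V} (hs : Maximal G.IsIndepSet (s : Set V)) :
    (graphIdeal K G).colon {∏ i ∈ s, X i} = Ideal.span (X '' (s : Set V)ᶜ) := by
  have hprime := isPrime_span_X_image (R := K) (s : Set V)ᶜ
  apply le_antisymm
  · intro g hg
    have hprod : ∏ i ∈ s, X i ∉ Ideal.span (X '' (s : Set V)ᶜ : Set (MvPolynomial V K)) := by
      simp [Ideal.IsPrime.prod_mem_iff, X_mem_span_X_image]
    exact (hprime.mem_or_mem (graphIdeal_le_span_X_image_compl K hs.1
      (Submodule.mem_colon_singleton.1 hg))).resolve_right hprod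
  · refine Ideal.span_le.2 ?_
    rintro _ ⟨v, hv, rfl⟩
    obtain ⟨u, hu, hvu⟩ := exists_adj_mem_of_maximal_isIndepSet hs hv
    have hedge : X v * X u ∈ graphIdeal K G := Ideal.subset_span ⟨v, u, hvu, rfl⟩
    exact Submodule.mem_colon_singleton.2
      (Ideal.mem_of_dvd _ (mul_dvd_mul_left (X v) (Finset.dvd_prod_of_mem X hu)) hedge)

theorem isAssociatedPrime_span_X_image_compl [Finite V] {s : Set V}
    (hs : Maximal G.IsIndepSet s) :
    IsAssociatedPrime (Ideal.span (X '' sᶜ) : Ideal (MvPolynomial V K))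
      (MvPolynomial V K ⧸ graphIdeal K G) := by
  obtain ⟨s, rfl⟩ := s.toFinite.exists_finset_coe
  have := isPrime_span_X_image (R := K) (s : Set V)ᶜ
  exact isAssociatedPrime_quotient_of_colon_eq (colon_graphIdeal_prod_X K hs)

theorem depthR_quotient_graphIdeal_le_ncard {n : ℕ} {G : SimpleGraph (Fin n)} {s : Set (Fin n)}
    (hs : Maximal G.IsIndepSet s) :
    depthR n K (MvPolynomial (Fin n) K ⧸ graphIdeal K G) ≤ s.ncard := by
  refine csSup_le' ?_
  rintro k ⟨rs, rfl, hrs, hreg⟩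
  have : (maxIdeal n K).IsPrime := by
    simpa only [maxIdeal, Set.image_univ] using isPrime_span_X_image (R := K) Set.univ
  have hle := length_le_ringKrullDim_quotient_of_isAssociatedPrime (m := maxIdeal n K)
    (isAssociatedPrime_span_X_image_compl K hs)
    (Ideal.span_mono (Set.image_subset_range _ _)) hrs hreg.toIsWeaklyRegular
  rw [ringKrullDim_quotient_span_X_image_compl, ringKrullDim_eq_zero_of_field, zero_add] at hle
  exact_mod_cast hle

end EdgeIdeals

/-- If `G` is a bipartite graph on `n` vertices without isolated
vertices, then `depth R/I(G) ≤ ⌊n/2⌋`. -/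
theorem stmt_15 (K : Type) [Field K] {n : ℕ} (G : SimpleGraph (Fin n))
    (hbip : G.IsBipartiteGraph) (hniso : ∀ v : Fin n, ∃ u : Fin n, G.Adj v u) :
    depthR n K (MvPolynomial (Fin n) K ⧸ graphIdeal K G) ≤ n / 2 := by
  obtain ⟨A, hA⟩ := hbip
  have hbipWith : G.IsBipartiteWith A Aᶜ :=
    ⟨disjoint_compl_right, fun u v huv ↦ by grind [hA u v huv]⟩
  have hle := depthR_quotient_graphIdeal_le_ncard K
    (maximal_isIndepSet_of_isBipartiteWith hbipWith hniso)
  have hle_compl := depthR_quotient_graphIdeal_le_ncard K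
    (maximal_isIndepSet_of_isBipartiteWith hbipWith.symm hniso)
  have hcard : A.ncard + Aᶜ.ncard = n := by simpa using Set.ncard_add_ncard_compl A
  omega
end

section
/- Let G be a cycle of odd length n = 2k+1 and let I = I(G) be its edge ideal in R = K[x_1,...,x_n]. Then Ass(R/I^t) = Min(R/I) for t ≤ k, and Ass(R/I^t) = Min(R/I) ∪ {m} for t ≥ k+1, where m = (x_1,...,x_n) is the maximal graded ideal. Moreover, for t ≥ k+1 one has m = (I^t : c) for a monomial c of degree 2t-1. -/
open MvPolynomial

/-- The cycle graph of length `n` on the vertex set `ZMod n`: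
`i` is adjacent to `i ± 1`. -/
def cycleGraph (n : ℕ) : SimpleGraph (ZMod n) :=
  SimpleGraph.fromRel (fun i j => j = i + 1)

/-!
Let `I⁽ᵗ⁾` be the intersection of the powers `(x_v : v ∈ C)ᵗ` over all vertex covers `C`. If a prime
`P = (Iᵗ : f)` has `f ∉ I⁽ᵗ⁾`, then it lies inside some `(x_v : v ∈ C)` with `C` minimal, because
`(x_v : v ∈ C)ᵗ` is primary, and hence equals it. Everything else rests on the identity
`Iᵗ = I⁽ᵗ⁾ ∩ m²ᵗ` for odd cycles: it shows that `P ⊇ m²ᵗ`, i.e. `P = m`, whenever `f ∈ I⁽ᵗ⁾`.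

To prove it, take an exponent vector `a` of total degree at least `2t` whose sum over every vertex
cover is at least `t`. Removing a vertex from the cycle leaves a bipartite graph, so half-integral
covers with a weight different from `1/2` dominate averages of two covers, while those with all
weights positive are controlled by the degree. The deficient Hall theorem on the bipartite double
cover therefore yields a half-integral matching of weight at least `t` with capacities `a`, and
halving its prefix sums around the cycle makes it integral.

If `2t ≤ n` the cover conditions alone force degree `2t`, so `Iᵗ = I⁽ᵗ⁾` and `m` does not occur. If
`n = 2k + 1 < 2t`, then `m = (Iᵗ : c)` for `c = x_1 ⋯ x_n (x_1 x_2)ˢ` with `s = t - k - 1`, since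
`c` has degree `2t - 1` and `x_v x_1 ⋯ x_n` is the product of every other edge of a walk
once around the cycle from `v` to `v`.
-/

section Transport

open Finset

variable {α β : Type*}

lemma card_filter_sigma_fin_fst_eq_le {γ : Type*} [DecidableEq α] {a : α → ℕ} {M : Finset γ}
    {f : γ → Σ i, Fin (a i)} (hf : Set.InjOn f M) (i : α) : #{p ∈ M | (f p).1 = i} ≤ a i := by
  calc #{p ∈ M | (f p).1 = i}
      ≤ #(({i} : Finset α).sigma fun i => (univ : Finset (Fin (a i)))) :=
        card_le_card_of_injOn f (by simp [Set.MapsTo]) (hf.mono (coe_subset.2 (filter_subset _ _)))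
    _ = a i := by simp

variable [Fintype α]

lemma card_filter_sigma_fin_fst (a : α → ℕ) (p : α → Prop) [DecidablePred p] :
    #{x : Σ i, Fin (a i) | p x.1} = ∑ i with p i, a i := by
  have hsigma : ({x : Σ i, Fin (a i) | p x.1} : Finset _) =
      ({i | p i} : Finset α).sigma fun _ => univ := by
    ext; simp
  simp [hsigma, card_sigma]

variable [Fintype β]

theorem exists_partial_matching_card_ge (r : α → β → Prop) (s : ℕ) [DecidableEq α] [DecidableRel r]
    (h : ∀ S : Finset α, s ≤ #Sᶜ + #{y | ∃ x ∈ S, r x y}) :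
    ∃ M : Finset (α × β), (∀ p ∈ M, r p.1 p.2) ∧ Set.InjOn Prod.fst (M : Set (α × β)) ∧
      Set.InjOn Prod.snd (M : Set (α × β)) ∧ s ≤ #M := by
  classical
  obtain ⟨D, hD⟩ : ∃ D, Fintype.card α = s + D :=
    Nat.exists_eq_add_of_le (by simpa using h ∅)
  -- Adding `D` elements related to everything turns the deficient condition into Hall's condition.
  let N : α → Finset (β ⊕ Fin D) := fun x => ({y | r x y} : Finset β).disjSum univ
  have hall : ∀ S : Finset α, #S ≤ #(S.biUnion N) := by
    intro S
    obtain rfl | ⟨x₀, hx₀⟩ := S.eq_empty_or_nonempty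
    · simp
    have hsub : ({y | ∃ x ∈ S, r x y} : Finset β).disjSum univ ⊆ S.biUnion N := by
      rintro (y | y) hy
      · simpa [N] using hy
      · exact mem_biUnion.2 ⟨x₀, hx₀, by simp [N]⟩
    have hcard := card_le_card hsub
    rw [card_disjSum, card_univ, Fintype.card_fin] at hcard
    have := h S
    have := card_add_card_compl S
    lia
  obtain ⟨f, hf, hfN⟩ := (all_card_le_biUnion_card_iff_exists_injective N).1 hall
  let M : Finset (α × β) := {p | f p.1 = .inl p.2}
  have mem_M : ∀ p, p ∈ M ↔ f p.1 = .inl p.2 := by simp [M]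
  refine ⟨M, fun p hp => ?_, fun p hp q hq hpq => ?_, fun p hp q hq hpq => ?_, ?_⟩
  · simpa [(mem_M p).1 hp, N] using hfN p.1
  · exact Prod.ext hpq (Sum.inl_injective (((mem_M p).1 hp).symm.trans (hpq ▸ (mem_M q).1 hq)))
  · exact Prod.ext (hf (((mem_M p).1 hp).trans (hpq ▸ ((mem_M q).1 hq).symm))) hpq
  · have hleft : (univ.image f).toLeft ⊆ M.image Prod.snd := by
      intro y hy
      obtain ⟨x, -, hx⟩ := mem_image.1 (mem_toLeft.1 hy)
      exact mem_image.2 ⟨(x, y), (mem_M _).2 hx, rfl⟩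
    have hleft_card : #(univ.image f).toLeft ≤ #M := (card_le_card hleft).trans card_image_le
    have hright_card : #(univ.image f).toRight ≤ D := (card_le_univ _).trans_eq (Fintype.card_fin D)
    have := card_toLeft_add_card_toRight (u := univ.image f)
    rw [card_image_of_injective _ hf, card_univ] at this
    lia

theorem exists_transport_sum_ge (r : α → β → Prop) (a : α → ℕ) (b : β → ℕ) (s : ℕ)
    [DecidableEq α] [DecidableRel r]
    (h : ∀ S : Finset α, s ≤ ∑ i ∈ Sᶜ, a i + ∑ j with ∃ i ∈ S, r i j, b j) :
    ∃ z : α → β → ℕ, (∀ i j, z i j ≠ 0 → r i j) ∧ (∀ i, ∑ j, z i j ≤ a i) ∧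
      (∀ j, ∑ i, z i j ≤ b j) ∧ s ≤ ∑ i, ∑ j, z i j := by
  classical
  -- Blow up `i` into `a i` copies and `j` into `b j` copies.
  have hblow : ∀ S : Finset (Σ i, Fin (a i)),
      s ≤ #Sᶜ + #{y : Σ j, Fin (b j) | ∃ x ∈ S, r x.1 y.1} := by
    intro S
    have hcompl : ({x | x.1 ∉ S.image Sigma.fst} : Finset (Σ i, Fin (a i))) ⊆ Sᶜ := by
      intro x hx
      simp only [mem_filter, mem_univ, true_and, mem_compl] at hx ⊢
      exact fun hxS => hx (mem_image_of_mem _ hxS)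
    have hcompl_card := card_le_card hcompl
    rw [card_filter_sigma_fin_fst a (· ∉ S.image Sigma.fst), filter_not, filter_mem_eq_inter,
      univ_inter, ← compl_eq_univ_sdiff] at hcompl_card
    have hnbr_card := card_filter_sigma_fin_fst b fun j => ∃ i ∈ S.image Sigma.fst, r i j
    simp only [mem_image, exists_exists_and_eq_and] at hnbr_card
    have := h (S.image Sigma.fst)
    simp only [mem_image, exists_exists_and_eq_and] at this
    lia
  obtain ⟨M, hMr, hfst, hsnd, hs⟩ := exists_partial_matching_card_ge
    (fun (x : Σ i, Fin (a i)) (y : Σ j, Fin (b j)) => r x.1 y.1) s hblow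
  have sum_row : ∀ i, ∑ j, #{p ∈ M | p.1.1 = i ∧ p.2.1 = j} = #{p ∈ M | p.1.1 = i} := by
    intro i
    rw [card_eq_sum_card_fiberwise (f := fun p => p.2.1) (t := univ) (by simp)]
    simp only [filter_filter]
  have sum_col : ∀ j, ∑ i, #{p ∈ M | p.1.1 = i ∧ p.2.1 = j} = #{p ∈ M | p.2.1 = j} := by
    intro j
    rw [card_eq_sum_card_fiberwise (f := fun p => p.1.1) (t := univ) (by simp)]
    simp only [filter_filter, and_comm]
  refine ⟨fun i j => #{p ∈ M | p.1.1 = i ∧ p.2.1 = j}, fun i j hij => ?_, fun i => ?_,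
    fun j => ?_, ?_⟩
  · obtain ⟨p, hp⟩ := card_ne_zero.1 hij
    obtain ⟨hpM, rfl, rfl⟩ := mem_filter.1 hp
    exact hMr p hpM
  · exact (sum_row i).trans_le (card_filter_sigma_fin_fst_eq_le hfst i)
  · exact (sum_col j).trans_le (card_filter_sigma_fin_fst_eq_le hsnd j)
  · calc s ≤ #M := hs
      _ = ∑ i, #{p ∈ M | p.1.1 = i} := card_eq_sum_card_fiberwise (by simp)
      _ = _ := sum_congr rfl fun i _ => (sum_row i).symm

end Transport

section VertexCover

open Finset

variable {V : Type*} [Fintype V] {G : SimpleGraph V} {a : V → ℕ} {t : ℕ}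

-- As `y v ≠ 1`, colouring `G - v` splits `y` into (at least) the sum of two vertex covers.
lemma two_mul_le_sum_mul_of_isBipartite_induce {v : V} (hv : (G.induce {v}ᶜ).IsBipartite)
    (hcover : ∀ C : Finset V, G.IsVertexCover C → t ≤ ∑ i ∈ C, a i) {y : V → ℕ}
    (hy : ∀ i j, G.Adj i j → 2 ≤ y i + y j) (hyv : y v ≠ 1) :
    2 * t ≤ ∑ i, y i * a i := by
  classical
  obtain ⟨c⟩ := hv
  let C (r : Fin 2) : Finset V := {i | 2 ≤ y i ∨ ∃ hi : i ≠ v, y i = 1 ∧ c ⟨i, hi⟩ = r}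
  have mem_C : ∀ r i, i ∈ C r ↔ 2 ≤ y i ∨ ∃ hi : i ≠ v, y i = 1 ∧ c ⟨i, hi⟩ = r := by simp [C]
  have hC : ∀ r, G.IsVertexCover (C r) := by
    intro r i j hij
    simp only [mem_coe, mem_C]
    by_contra! hnot
    have hi : y i = 1 := by have := hy i j hij; lia
    have hj : y j = 1 := by have := hy i j hij; lia
    have hiv : i ≠ v := by rintro rfl; exact hyv hi
    have hjv : j ≠ v := by rintro rfl; exact hyv hj
    have hadj : (G.induce {v}ᶜ).Adj ⟨i, hiv⟩ ⟨j, hjv⟩ := hij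
    have hcol := c.valid hadj
    have := hnot.1.2 hiv hi
    have := hnot.2.2 hjv hj
    lia
  have hsplit : ∀ i, (if i ∈ C 0 then 1 else 0) + (if i ∈ C 1 then 1 else 0) ≤ y i := by
    intro i
    have h₀ := mem_C 0 i
    have h₁ := mem_C 1 i
    grind
  calc 2 * t ≤ ∑ i ∈ C 0, a i + ∑ i ∈ C 1, a i := by
        rw [two_mul]
        exact add_le_add (hcover _ (hC 0)) (hcover _ (hC 1))
    _ = ∑ i, ((if i ∈ C 0 then 1 else 0) + (if i ∈ C 1 then 1 else 0)) * a i := by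
        simp [add_mul, sum_add_distrib]
    _ ≤ ∑ i, y i * a i := by
        gcongr with i
        exact hsplit i

lemma two_mul_le_sum_mul_of_forall_isBipartite_induce (hG : ∀ v, (G.induce {v}ᶜ).IsBipartite)
    (hcover : ∀ C : Finset V, G.IsVertexCover C → t ≤ ∑ i ∈ C, a i) (ha : 2 * t ≤ ∑ i, a i)
    {y : V → ℕ} (hy : ∀ i j, G.Adj i j → 2 ≤ y i + y j) : 2 * t ≤ ∑ i, y i * a i := by
  by_cases! hpos : ∀ i, y i ≠ 0
  · refine ha.trans (sum_le_sum fun i _ => ?_)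
    exact Nat.le_mul_of_pos_left _ (Nat.pos_of_ne_zero (hpos i))
  · obtain ⟨v, hv⟩ := hpos
    exact two_mul_le_sum_mul_of_isBipartite_induce (hG v) hcover hy (by lia)

lemma two_mul_le_sum_of_two_mul_le_card (hG : ∀ v, (G.induce {v}ᶜ).IsBipartite)
    (hcover : ∀ C : Finset V, G.IsVertexCover C → t ≤ ∑ i ∈ C, a i)
    (ht : 2 * t ≤ Fintype.card V) : 2 * t ≤ ∑ i, a i := by
  classical
  by_cases! hpos : ∀ i, a i ≠ 0
  · calc 2 * t ≤ ∑ _i : V, 1 := by simpa using ht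
      _ ≤ ∑ i, a i := sum_le_sum fun i _ => Nat.one_le_iff_ne_zero.2 (hpos i)
  · obtain ⟨v, hv⟩ := hpos
    have hy : ∀ i j, G.Adj i j → 2 ≤ (if i = v then 2 else 1) + (if j = v then 2 else 1) := by
      grind
    refine (two_mul_le_sum_mul_of_isBipartite_induce (hG v) hcover hy (by simp)).trans_eq ?_
    refine sum_congr rfl fun i _ => ?_
    split_ifs with hi <;> simp_all

-- The weights `[i ∉ S] + [i ∈ N(S)]` satisfy `2 ≤ y i + y j` on edges, so the previous bound
-- is exactly the deficient Hall condition.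
theorem exists_half_integral_matching (hG : ∀ v, (G.induce {v}ᶜ).IsBipartite)
    (hcover : ∀ C : Finset V, G.IsVertexCover C → t ≤ ∑ i ∈ C, a i) (ha : 2 * t ≤ ∑ i, a i) :
    ∃ z : V → V → ℕ, (∀ i j, z i j ≠ 0 → G.Adj i j) ∧ (∀ i, ∑ j, z i j ≤ a i) ∧
      (∀ j, ∑ i, z i j ≤ a j) ∧ 2 * t ≤ ∑ i, ∑ j, z i j := by
  classical
  refine exists_transport_sum_ge G.Adj a a (2 * t) fun S => ?_
  have hy : ∀ i j, G.Adj i j →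
      2 ≤ ((if i ∉ S then 1 else 0) + if ∃ l ∈ S, G.Adj l i then 1 else 0) +
        ((if j ∉ S then 1 else 0) + if ∃ l ∈ S, G.Adj l j then 1 else 0) := by
    intro i j hij
    have hj : i ∈ S → ∃ l ∈ S, G.Adj l j := fun hi => ⟨i, hi, hij⟩
    have hi : j ∈ S → ∃ l ∈ S, G.Adj l i := fun hj => ⟨j, hj, hij.symm⟩
    grind
  refine (two_mul_le_sum_mul_of_forall_isBipartite_induce hG hcover ha hy).trans_eq ?_
  simp [add_mul, sum_add_distrib, sum_filter, compl_eq_univ_sdiff, ← filter_notMem_eq_sdiff]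

end VertexCover

section Cycle

open Finset

lemma prod_range_two_mul {M : Type*} [CommMonoid M] (f : ℕ → M) (k : ℕ) :
    ∏ j ∈ range (2 * k), f j = ∏ j ∈ range k, f (2 * j) * f (2 * j + 1) := by
  induction k with
  | zero => simp
  | succ k ih =>
    rw [mul_add_one, prod_range_succ, prod_range_succ, prod_range_succ, ih,
      mul_assoc]

variable {n : ℕ}

lemma cycleGraph_adj_add_one (hn : 1 < n) (i : ZMod n) : (cycleGraph n).Adj i (i + 1) := by
  have := Fact.mk hn
  simp [cycleGraph]

variable [NeZero n]

lemma zmod_val_add_one_of_ne_zero {i : ZMod n} (hi : i + 1 ≠ 0) : (i + 1).val = i.val + 1 := by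
  obtain ⟨n, rfl⟩ := Nat.exists_eq_succ_of_ne_zero (NeZero.ne n)
  exact Fin.val_add_one_of_lt (Fin.lt_last_iff_ne_last.2 fun h => hi (h ▸ Fin.last_add_one n))

lemma zmod_val_add_one_eq_of_eq_zero {i : ZMod n} (hi : i + 1 = 0) : i.val + 1 = n := by
  rw [eq_neg_of_add_eq_zero_left hi]
  obtain ⟨n, rfl⟩ := Nat.exists_eq_succ_of_ne_zero (NeZero.ne n)
  simp [ZMod.val_neg_one]

@[to_additive]
lemma prod_zmod_eq_prod_range {M : Type*} [CommMonoid M] (f : ZMod n → M) :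
    ∏ i, f i = ∏ j ∈ range n, f j :=
  prod_bij' (fun i _ => i.val) (fun j _ => (j : ZMod n)) (by simp [ZMod.val_lt]) (by simp)
    (by simp) (fun j hj => ZMod.val_cast_of_lt (mem_range.1 hj)) (by simp)

lemma isBipartite_induce_compl_singleton_cycleGraph (v : ZMod n) :
    ((cycleGraph n).induce {v}ᶜ).IsBipartite := by
  have hsucc : ∀ i : ZMod n, i + 1 ≠ v → (i + 1 - v).val = (i - v).val + 1 := by
    intro i hi
    rw [add_sub_right_comm, zmod_val_add_one_of_ne_zero]
    rwa [← add_sub_right_comm, sub_ne_zero]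
  refine ⟨SimpleGraph.Coloring.mk (fun i => Fin.ofNat 2 (i.1 - v).val) ?_⟩
  rintro ⟨i, hi⟩ ⟨j, hj⟩ ⟨-, h⟩
  simp only [Function.Embedding.subtype_apply] at h
  rcases h with rfl | rfl
  · simp only [hsucc i hj, Ne, Fin.ext_iff, Fin.val_ofNat]
    lia
  · simp only [hsucc j hi, Ne, Fin.ext_iff, Fin.val_ofNat]
    lia

lemma sum_eq_add_of_ne_zero_imp_cycleGraph_adj (hn : 3 ≤ n) {g : ZMod n → ℕ} {i : ZMod n}
    (hg : ∀ j, g j ≠ 0 → (cycleGraph n).Adj (i + 1) j) :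
    ∑ j, g j = g i + g (i + 1 + 1) := by
  have htwo : i ≠ i + 1 + 1 := by
    have : ((2 : ℕ) : ZMod n) ≠ 0 := by
      rw [Ne, ZMod.natCast_eq_zero_iff]
      exact Nat.not_dvd_of_pos_of_lt two_pos hn
    rwa [add_assoc, one_add_one_eq_two, Ne, left_eq_add, ← Nat.cast_two]
  rw [← sum_pair htwo]
  refine (sum_subset (subset_univ _) fun j _ hj => ?_).symm
  by_contra hgj
  obtain ⟨-, h | h⟩ := hg j hgj
  · simp [h] at hj
  · simp [add_right_cancel h] at hj

-- The witness telescopes the halved prefix sums of `z`, truncated at `2 * t`.  The even truncation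
-- point makes the wrap-around constraint at `0` hold without any parity assumption.
lemma exists_le_sum_of_add_le_two_mul {z a : ZMod n → ℕ} {t : ℕ}
    (hz : ∀ i, z i + z (i + 1) ≤ 2 * a (i + 1)) (ht : 2 * t ≤ ∑ i, z i) :
    ∃ w : ZMod n → ℕ, (∀ i, w i + w (i + 1) ≤ a (i + 1)) ∧ t ≤ ∑ i, w i := by
  let S (m : ℕ) : ℕ := ∑ j ∈ range m, z j
  let T (m : ℕ) : ℕ := min (S m) (2 * t) / 2
  have S_succ : ∀ i : ZMod n, S (i.val + 1) = S i.val + z i := by simp [S, sum_range_succ]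
  have S_n : S n = ∑ i, z i := (sum_zmod_eq_sum_range z).symm
  have T_mono : Monotone T := by
    intro l m hlm
    have : S l ≤ S m := sum_le_sum_of_subset (range_mono hlm)
    dsimp only [T]
    gcongr
  refine ⟨fun i => T (i.val + 1) - T i.val, fun i => ?_, ?_⟩
  · have := hz i
    have := S_succ i
    have := S_succ (i + 1)
    by_cases hi : i + 1 = 0
    · have : i.val + 1 = n := zmod_val_add_one_eq_of_eq_zero hi
      have : S (i + 1).val = 0 := by simp [hi, S]
      grind
    · have := zmod_val_add_one_of_ne_zero hi
      grind
  · rw [sum_zmod_eq_sum_range]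
    calc t = T n - T 0 := by simp [T, S_n, ht, S]
      _ = ∑ j ∈ range n, (T (j + 1) - T j) := (sum_range_tsub T_mono n).symm
      _ ≤ _ := (sum_congr rfl fun j hj => by rw [ZMod.val_cast_of_lt (mem_range.1 hj)]).le

theorem exists_integral_matching_cycleGraph (hn : 3 ≤ n) {a : ZMod n → ℕ} {t : ℕ}
    (hcover : ∀ C : Finset (ZMod n), (cycleGraph n).IsVertexCover C → t ≤ ∑ i ∈ C, a i)
    (ha : 2 * t ≤ ∑ i, a i) :
    ∃ w : ZMod n → ℕ, (∀ i, w i + w (i + 1) ≤ a (i + 1)) ∧ t ≤ ∑ i, w i := by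
  obtain ⟨z, hz, hrow, hcol, hs⟩ := exists_half_integral_matching
    isBipartite_induce_compl_singleton_cycleGraph hcover ha
  have row : ∀ i, ∑ j, z (i + 1) j = z (i + 1) i + z (i + 1) (i + 1 + 1) := fun i =>
    sum_eq_add_of_ne_zero_imp_cycleGraph_adj hn (hz (i + 1))
  have col : ∀ i, ∑ j, z j (i + 1) = z i (i + 1) + z (i + 1 + 1) (i + 1) := fun i =>
    sum_eq_add_of_ne_zero_imp_cycleGraph_adj hn fun j hj => (hz j (i + 1) hj).symm
  refine exists_le_sum_of_add_le_two_mul (z := fun i => z i (i + 1) + z (i + 1) i) (fun i => ?_) ?_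
  · have := hrow (i + 1)
    have := hcol (i + 1)
    have := row i
    have := col i
    lia
  · calc 2 * t ≤ ∑ i, ∑ j, z i j := hs
      _ = ∑ i, ∑ j, z (i + 1) j := (Equiv.sum_comp (Equiv.addRight 1) fun i => ∑ j, z i j).symm
      _ = ∑ i, z (i + 1) i + ∑ i, z (i + 1) (i + 1 + 1) := by simp only [row, sum_add_distrib]
      _ = ∑ i, z (i + 1) i + ∑ i, z i (i + 1) := by
          congr 1
          exact Equiv.sum_comp (Equiv.addRight 1) fun i => z i (i + 1)
      _ = ∑ i, (z i (i + 1) + z (i + 1) i) := by rw [← sum_add_distrib]; simp only [add_comm]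

end Cycle

section AssociatedPrimes

variable {R : Type*} [CommRing R] [IsNoetherianRing R] {I P : Ideal R}

lemma mem_associatedPrimes_quotient_iff :
    P ∈ associatedPrimes R (R ⧸ I) ↔ P.IsPrime ∧ ∃ f, P = I.colon {f} := by
  rw [AssociatedPrimes.mem_iff, isAssociatedPrime_iff, Ideal.Quotient.mk_surjective.exists]
  have hcolon : ∀ f, (⊥ : Submodule R (R ⧸ I)).colon {Ideal.Quotient.mk I f} = I.colon {f} := by
    intro f
    ext g
    rw [Submodule.mem_colon_singleton, Submodule.mem_colon_singleton, Submodule.mem_bot,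
      smul_eq_mul, ← Ideal.Quotient.eq_zero_iff_mem]
    rfl
  simp only [hcolon]

lemma minimalPrimes_subset_associatedPrimes_quotient_pow {t : ℕ} (ht : t ≠ 0) :
    I.minimalPrimes ⊆ associatedPrimes R (R ⧸ I ^ t) := by
  have h := Module.associatedPrimes.minimalPrimes_annihilator_subset_associatedPrimes R (R ⧸ I ^ t)
  rwa [Ideal.annihilator_quotient, ← Ideal.radical_minimalPrimes, Ideal.radical_pow _ ht,
    Ideal.radical_minimalPrimes] at h

end AssociatedPrimes

section VariableIdeals

variable {σ R : Type*}

lemma mem_span_X_image_pow_iff [CommSemiring R] {C : Finset σ} {t : ℕ} {f : MvPolynomial σ R} :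
    f ∈ Ideal.span (X '' (C : Set σ)) ^ t ↔ ∀ d ∈ f.support, t ≤ ∑ i ∈ C, d i := by
  classical
  refine ⟨fun hf => ?_, fun hf => ?_⟩
  · induction t generalizing f with
    | zero => simp
    | succ t ih =>
      rw [pow_succ] at hf
      induction hf using Submodule.mul_induction_on' with
      | mem_mul_mem g hg h hh =>
        intro d hd
        obtain ⟨d₁, hd₁, d₂, hd₂, rfl⟩ := Finset.mem_add.1 (support_mul g h hd)
        obtain ⟨i, hi, hdi⟩ := mem_ideal_span_X_image.1 hh d₂ hd₂
        have hle : d₂ i ≤ ∑ j ∈ C, d₂ j := Finset.single_le_sum_of_canonicallyOrdered hi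
        have := ih hg d₁ hd₁
        simp only [Finsupp.add_apply, Finset.sum_add_distrib]
        lia
      | add g _ h _ hg hh =>
        intro d hd
        exact (Finset.mem_union.1 (support_add hd)).elim (hg d) (hh d)
  · rw [f.as_sum]
    refine Ideal.sum_mem _ fun d hd => ?_
    have hdvd : ∏ i ∈ C, (X i : MvPolynomial σ R) ^ d i ∣ monomial d (f.coeff d) := by
      rw [monomial_eq, d.prod_of_support_subset Finset.subset_union_right _ (by simp)]
      exact (Finset.prod_dvd_prod_of_subset C _ _ Finset.subset_union_left).mul_left _
    refine Ideal.mem_of_dvd _ hdvd (Ideal.pow_le_pow_right (hf d hd) ?_)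
    rw [← Finset.prod_pow_eq_pow_sum]
    exact Ideal.prod_mem_prod fun i hi =>
      Ideal.pow_mem_pow (Ideal.subset_span (Set.mem_image_of_mem X hi)) _

lemma mem_span_X_image_pow_iff_le_weightedOrder [CommSemiring R] {C : Finset σ} {t : ℕ}
    {f : MvPolynomial σ R} : f ∈ Ideal.span (X '' (C : Set σ)) ^ t ↔
      (t : ℕ∞) ≤ (f : MvPowerSeries σ R).weightedOrder ((C : Set σ).indicator 1) := by
  classical
  have hweight : ∀ d : σ →₀ ℕ, Finsupp.weight ((C : Set σ).indicator 1) d = ∑ i ∈ C, d i := by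
    intro d
    rw [Finsupp.weight_apply,
      d.sum_of_support_subset (Finset.subset_union_right (s₁ := C)) _ (by simp)]
    simp [Set.indicator_apply, Finset.union_inter_cancel_left]
  simp only [mem_span_X_image_pow_iff, ← hweight]
  refine ⟨fun hf => MvPowerSeries.nat_le_weightedOrder _ fun d hd => ?_, fun hf d hd => ?_⟩
  · rw [coeff_coe, ← notMem_support_iff]
    exact fun hdf => hd.not_ge (hf d hdf)
  · rw [mem_support_iff, ← coeff_coe] at hd
    exact_mod_cast hf.trans (MvPowerSeries.weightedOrder_le _ hd)

-- That is, powers of monomial primes are primary: the order along `C` is additive on products.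
lemma mem_span_X_image_of_mul_mem_pow [CommSemiring R] [NoZeroDivisors R] {C : Finset σ} {t : ℕ}
    {f g : MvPolynomial σ R} (hgf : g * f ∈ Ideal.span (X '' (C : Set σ)) ^ t)
    (hf : f ∉ Ideal.span (X '' (C : Set σ)) ^ t) : g ∈ Ideal.span (X '' (C : Set σ)) := by
  rw [← pow_one (Ideal.span _), mem_span_X_image_pow_iff_le_weightedOrder, Nat.cast_one,
    Order.one_le_iff_ne_zero]
  intro hg
  rw [mem_span_X_image_pow_iff_le_weightedOrder] at hgf hf
  rw [coe_mul, MvPowerSeries.weightedOrder_mul, hg, zero_add] at hgf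
  exact hf hgf

lemma ker_constantCoeff_eq_idealOfVars [CommSemiring R] :
    RingHom.ker (constantCoeff (σ := σ) (R := R)) = idealOfVars σ R := by
  ext f
  rw [← pow_one (idealOfVars σ R), mem_pow_idealOfVars_iff', RingHom.mem_ker, constantCoeff_eq]
  simp [Finsupp.degree_eq_zero_iff]

instance isMaximal_idealOfVars {K : Type*} [Field K] : (idealOfVars σ K).IsMaximal := by
  rw [← ker_constantCoeff_eq_idealOfVars]
  exact RingHom.ker_isMaximal_of_surjective _ fun c => ⟨C c, constantCoeff_C σ c⟩

end VariableIdeals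

section EdgeIdeal

variable {K : Type} [Field K] {V : Type} {G : SimpleGraph V} {t : ℕ}

lemma X_mul_X_mem_graphIdeal {u v : V} (huv : G.Adj u v) : X u * X v ∈ graphIdeal K G :=
  Ideal.subset_span ⟨u, v, huv, rfl⟩

lemma graphIdeal_le_idealOfVars_sq : graphIdeal K G ≤ idealOfVars V K ^ 2 := by
  rw [graphIdeal, Ideal.span_le, sq]
  rintro _ ⟨u, v, -, rfl⟩
  exact Ideal.mul_mem_mul (Ideal.subset_span ⟨u, rfl⟩) (Ideal.subset_span ⟨v, rfl⟩)

lemma graphIdeal_pow_le_idealOfVars_pow : graphIdeal K G ^ t ≤ idealOfVars V K ^ (2 * t) := by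
  rw [pow_mul]
  exact Ideal.pow_right_mono graphIdeal_le_idealOfVars_sq t

lemma graphIdeal_le_span_X_image {C : Set V} (hC : G.IsVertexCover C) :
    graphIdeal K G ≤ Ideal.span (X '' C) := by
  rw [graphIdeal, Ideal.span_le]
  rintro _ ⟨u, v, huv, rfl⟩
  rcases hC huv with hu | hv
  · exact Ideal.mul_mem_right _ _ (Ideal.subset_span ⟨u, hu, rfl⟩)
  · exact Ideal.mul_mem_left _ _ (Ideal.subset_span ⟨v, hv, rfl⟩)

lemma isVertexCover_setOf_X_mem {Q : Ideal (MvPolynomial V K)} (hQ : Q.IsPrime)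
    (hGQ : graphIdeal K G ≤ Q) : G.IsVertexCover {v | X v ∈ Q} :=
  fun _ _ huv => hQ.mem_or_mem (hGQ (X_mul_X_mem_graphIdeal huv))

lemma eq_span_X_image_of_le {C : Set V} (hC : Minimal G.IsVertexCover C)
    {Q : Ideal (MvPolynomial V K)} (hQ : Q.IsPrime) (hGQ : graphIdeal K G ≤ Q)
    (hQC : Q ≤ Ideal.span (X '' C)) : Q = Ideal.span (X '' C) := by
  refine hQC.antisymm (Ideal.span_le.2 (Set.image_subset_iff.2 ?_))
  refine hC.le_of_le (isVertexCover_setOf_X_mem hQ hGQ) fun v hv => ?_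
  obtain ⟨i, hi, hvi⟩ := mem_ideal_span_X_image.1 (hQC hv) (Finsupp.single v 1)
    (by simp [mem_support_iff])
  obtain rfl : i = v := (Finsupp.single_apply_ne_zero.1 hvi).1
  exact hi

variable (K G t) in
/-- The `t`-th symbolic power of the edge ideal of `G`: the edge ideal is the intersection of the
primes `(x_v : v ∈ C)` over the vertex covers `C`, so its symbolic powers are the intersections of
the powers of these primes. Non-minimal covers are redundant but allowed. -/
noncomputable def graphIdealSymbolicPower : Ideal (MvPolynomial V K) :=
  ⨅ (C : Finset V) (_ : G.IsVertexCover C), Ideal.span (X '' (C : Set V)) ^ t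

lemma mem_graphIdealSymbolicPower_iff {f : MvPolynomial V K} :
    f ∈ graphIdealSymbolicPower K G t ↔
      ∀ d ∈ f.support, ∀ C : Finset V, G.IsVertexCover C → t ≤ ∑ i ∈ C, d i := by
  simp only [graphIdealSymbolicPower, Ideal.mem_iInf, mem_span_X_image_pow_iff]
  grind

lemma mem_minimalPrimes_of_eq_colon [Finite V] {P : Ideal (MvPolynomial V K)} (hP : P.IsPrime)
    {f : MvPolynomial V K} (hPf : P = (graphIdeal K G ^ t).colon {f})
    (hf : f ∉ graphIdealSymbolicPower K G t) : P ∈ (graphIdeal K G).minimalPrimes := by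
  have hGP : graphIdeal K G ≤ P := hP.le_of_pow_le (hPf ▸ Ideal.le_colon)
  simp only [graphIdealSymbolicPower, Ideal.mem_iInf, not_forall] at hf
  obtain ⟨C₀, hC₀, hfC₀⟩ := hf
  obtain ⟨C, hCC₀, hC⟩ := exists_minimal_le_of_wellFoundedLT G.IsVertexCover (C₀ : Set V) hC₀
  lift C to Finset V using C.toFinite
  have hfC : f ∉ Ideal.span (X '' (C : Set V)) ^ t := fun h =>
    hfC₀ (Ideal.pow_right_mono (Ideal.span_mono (Set.image_mono hCC₀)) t h)
  have hPC : P ≤ Ideal.span (X '' (C : Set V)) := by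
    intro g hg
    rw [hPf, Submodule.mem_colon_singleton] at hg
    exact mem_span_X_image_of_mul_mem_pow
      (Ideal.pow_right_mono (graphIdeal_le_span_X_image hC.prop) t hg) hfC
  refine ⟨⟨hP, hGP⟩, fun Q hQ hQP => ?_⟩
  rw [eq_span_X_image_of_le hC hP hGP hPC, eq_span_X_image_of_le hC hQ.1 hQ.2 (hQP.trans hPC)]

theorem associatedPrimes_graphIdeal_pow_eq_minimalPrimes [Finite V] (ht : t ≠ 0)
    (hsymb : graphIdealSymbolicPower K G t ≤ graphIdeal K G ^ t) :
    associatedPrimes (MvPolynomial V K) (MvPolynomial V K ⧸ graphIdeal K G ^ t) =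
      (graphIdeal K G).minimalPrimes := by
  refine (minimalPrimes_subset_associatedPrimes_quotient_pow ht).antisymm' fun P hP => ?_
  obtain ⟨hPprime, f, hPf⟩ := mem_associatedPrimes_quotient_iff.1 hP
  refine mem_minimalPrimes_of_eq_colon hPprime hPf fun hf => hPprime.ne_top ?_
  rw [hPf, Submodule.colon_eq_top_iff_subset, Set.singleton_subset_iff]
  exact hsymb hf

theorem associatedPrimes_graphIdeal_pow_subset [Finite V] {s : ℕ}
    (hsymb : graphIdealSymbolicPower K G t ⊓ idealOfVars V K ^ s ≤ graphIdeal K G ^ t) :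
    associatedPrimes (MvPolynomial V K) (MvPolynomial V K ⧸ graphIdeal K G ^ t) ⊆
      (graphIdeal K G).minimalPrimes ∪ {idealOfVars V K} := by
  intro P hP
  obtain ⟨hPprime, f, hPf⟩ := mem_associatedPrimes_quotient_iff.1 hP
  by_cases hf : f ∈ graphIdealSymbolicPower K G t
  · have hpow : idealOfVars V K ^ s ≤ P := by
      intro g hg
      rw [hPf, Submodule.mem_colon_singleton]
      exact hsymb ⟨Ideal.mul_mem_left _ _ hf, Ideal.mul_mem_right _ _ hg⟩
    exact .inr (isMaximal_idealOfVars.eq_of_le hPprime.ne_top (hPprime.le_of_pow_le hpow)).symm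
  · exact .inl (mem_minimalPrimes_of_eq_colon hPprime hPf hf)

lemma graphIdealSymbolicPower_le_idealOfVars_pow [Fintype V] (hG : ∀ v, (G.induce {v}ᶜ).IsBipartite)
    (ht : 2 * t ≤ Fintype.card V) : graphIdealSymbolicPower K G t ≤ idealOfVars V K ^ (2 * t) := by
  intro f hf
  rw [mem_pow_idealOfVars_iff]
  intro d hd
  rw [Finsupp.degree_eq_sum]
  exact two_mul_le_sum_of_two_mul_le_card hG (mem_graphIdealSymbolicPower_iff.1 hf d hd) ht

theorem colon_monomial_eq_idealOfVars {d : V →₀ ℕ} (hdeg : d.degree < 2 * t)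
    (hd : ∀ v, X v * monomial d 1 ∈ graphIdeal K G ^ t) :
    (graphIdeal K G ^ t).colon {monomial d 1} = idealOfVars V K := by
  refine (isMaximal_idealOfVars.eq_of_le ?_ ?_).symm
  · rw [Ne, Submodule.colon_eq_top_iff_subset, Set.singleton_subset_iff]
    intro hmem
    have := (monomial_mem_pow_idealOfVars_iff _ _ one_ne_zero).1
      (graphIdeal_pow_le_idealOfVars_pow hmem)
    lia
  · rw [Ideal.span_le]
    rintro _ ⟨v, rfl⟩
    exact Submodule.mem_colon_singleton.2 (hd v)

end EdgeIdeal

section CycleIdeal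

variable {K : Type} [Field K] {n k t : ℕ} [NeZero n]

lemma monomial_mem_graphIdeal_cycleGraph_pow (hn : 1 < n) {w : ZMod n → ℕ} {d : ZMod n →₀ ℕ}
    (hw : ∀ i, w i + w (i + 1) ≤ d (i + 1)) (ht : t ≤ ∑ i, w i) (c : K) :
    monomial d c ∈ graphIdeal K (cycleGraph n) ^ t := by
  have hedges : ∏ i, (X i * X (i + 1)) ^ w i ∈ graphIdeal K (cycleGraph n) ^ t := by
    refine Ideal.pow_le_pow_right ht ?_
    rw [← Finset.prod_pow_eq_pow_sum]
    exact Ideal.prod_mem_prod fun i _ =>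
      Ideal.pow_mem_pow (X_mul_X_mem_graphIdeal (cycleGraph_adj_add_one hn i)) _
  have shift : ∀ e : ZMod n → ℕ,
      ∏ i, (X i : MvPolynomial (ZMod n) K) ^ e i = ∏ i, X (i + 1) ^ e (i + 1) := fun e =>
    (Equiv.prod_comp (Equiv.addRight 1) fun i => (X i : MvPolynomial (ZMod n) K) ^ e i).symm
  refine Ideal.mem_of_dvd _ ?_ hedges
  calc ∏ i, (X i * X (i + 1) : MvPolynomial (ZMod n) K) ^ w i
      = ∏ i, X (i + 1) ^ (w i + w (i + 1)) := by
        simp only [mul_pow, Finset.prod_mul_distrib, pow_add, shift w, mul_comm]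
    _ ∣ ∏ i, X (i + 1) ^ d (i + 1) :=
        Finset.prod_dvd_prod_of_dvd _ _ fun i _ => pow_dvd_pow _ (hw i)
    _ = ∏ i, X i ^ d i := (shift d).symm
    _ ∣ monomial d c := by
        rw [monomial_eq, Finsupp.prod_fintype _ _ (by simp)]
        exact dvd_mul_left _ _

theorem graphIdealSymbolicPower_inf_idealOfVars_pow_le (hn : 3 ≤ n) :
    graphIdealSymbolicPower K (cycleGraph n) t ⊓ idealOfVars (ZMod n) K ^ (2 * t) ≤
      graphIdeal K (cycleGraph n) ^ t := by
  rintro f ⟨hsymb, hdeg⟩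
  rw [f.as_sum]
  refine Ideal.sum_mem _ fun d hd => ?_
  have hd_deg := (mem_pow_idealOfVars_iff _ _).1 hdeg d hd
  rw [Finsupp.degree_eq_sum] at hd_deg
  obtain ⟨w, hw, ht⟩ :=
    exists_integral_matching_cycleGraph hn (mem_graphIdealSymbolicPower_iff.1 hsymb d hd) hd_deg
  exact monomial_mem_graphIdeal_cycleGraph_pow (by lia) hw ht _

-- Going once around the cycle from `v` and back to `v` meets `2 * k + 2` vertices, which pair up
-- into `k + 1` consecutive edges.
lemma X_mul_prod_X_mem_graphIdeal_cycleGraph_pow (hk : k ≠ 0) (v : ZMod (2 * k + 1)) :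
    X v * ∏ i, X i ∈ graphIdeal K (cycleGraph (2 * k + 1)) ^ (k + 1) := by
  have hround : X v * ∏ i, X i =
      ∏ j ∈ Finset.range (2 * (k + 1)), (X (v + j) : MvPolynomial (ZMod (2 * k + 1)) K) := by
    calc X v * ∏ i, X i = (∏ i, X (v + i)) * X v := by
          rw [mul_comm (X v), ← Equiv.prod_comp (Equiv.addLeft v) X]
          simp only [Equiv.coe_addLeft]
      _ = (∏ j ∈ Finset.range (2 * k + 1), X (v + j)) * X (v + (2 * k + 1 : ℕ)) := by
          rw [prod_zmod_eq_prod_range, ZMod.natCast_self, add_zero]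
      _ = ∏ j ∈ Finset.range (2 * (k + 1)), X (v + j) := (Finset.prod_range_succ _ _).symm
  rw [hround, prod_range_two_mul, Finset.pow_eq_prod_const]
  refine Ideal.prod_mem_prod fun j _ => X_mul_X_mem_graphIdeal ?_
  rw [Nat.cast_add_one, ← add_assoc]
  exact cycleGraph_adj_add_one (by lia) _

theorem exists_colon_monomial_eq_idealOfVars (hk : k ≠ 0) (ht : k + 1 ≤ t) :
    ∃ d : ZMod (2 * k + 1) →₀ ℕ, d.degree = 2 * t - 1 ∧
      (graphIdeal K (cycleGraph (2 * k + 1)) ^ t).colon {monomial d 1} =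
        idealOfVars (ZMod (2 * k + 1)) K := by
  obtain ⟨s, rfl⟩ := Nat.exists_eq_add_of_le ht
  let d : ZMod (2 * k + 1) →₀ ℕ :=
    ∑ i, Finsupp.single i 1 + s • (Finsupp.single 0 1 + Finsupp.single 1 1)
  have hdeg : d.degree = 2 * k + 1 + s * 2 := by
    simp [d, mul_two]
  have hmonomial : (monomial d 1 : MvPolynomial (ZMod (2 * k + 1)) K) =
      (∏ i, X i) * (X 0 * X 1) ^ s := by
    simp only [d, X, monomial_mul, monomial_pow, ← monomial_sum_one, one_pow, mul_one]
  refine ⟨d, by lia, colon_monomial_eq_idealOfVars (by lia) fun v => ?_⟩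
  rw [hmonomial, ← mul_assoc, pow_add]
  refine Ideal.mul_mem_mul (X_mul_prod_X_mem_graphIdeal_cycleGraph_pow hk v)
    (Ideal.pow_mem_pow ?_ s)
  simpa using X_mul_X_mem_graphIdeal (K := K) (cycleGraph_adj_add_one (n := 2 * k + 1) (by lia) 0)

end CycleIdeal

/-- Let `G` be an odd cycle of length `n = 2k + 1` with edge ideal `I`.
Then `Ass(R/Iᵗ) = Min(R/I)` for `1 ≤ t ≤ k`, while for `t ≥ k + 1` one has
`Ass(R/Iᵗ) = Min(R/I) ∪ {m}` and moreover `m = (Iᵗ : c)` for some monomial `c` of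
degree `2t - 1`. -/
theorem stmt_17 (K : Type) [Field K] (k n : ℕ) (hk : 1 ≤ k) (hn : n = 2 * k + 1)
    (I : Ideal (MvPolynomial (ZMod n) K)) (hI : I = graphIdeal K (cycleGraph n))
    (m : Ideal (MvPolynomial (ZMod n) K))
    (hm : m = Ideal.span (Set.range (X : ZMod n → MvPolynomial (ZMod n) K))) :
    (∀ t : ℕ, 1 ≤ t → t ≤ k →
      associatedPrimes (MvPolynomial (ZMod n) K) (MvPolynomial (ZMod n) K ⧸ I ^ t) =
        I.minimalPrimes) ∧
    (∀ t : ℕ, k + 1 ≤ t →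
      associatedPrimes (MvPolynomial (ZMod n) K) (MvPolynomial (ZMod n) K ⧸ I ^ t) =
        I.minimalPrimes ∪ {m} ∧
      ∃ d : ZMod n →₀ ℕ, (d.sum fun _ e => e) = 2 * t - 1 ∧
        m = Submodule.colon (I ^ t)
              (Ideal.span {(monomial d (1 : K) : MvPolynomial (ZMod n) K)})) := by
  subst hn hI hm
  have hn : 3 ≤ 2 * k + 1 := by lia
  refine ⟨fun t ht htk => ?_, fun t ht => ?_⟩
  · refine associatedPrimes_graphIdeal_pow_eq_minimalPrimes (by lia) ?_
    have hdeg : graphIdealSymbolicPower K (cycleGraph (2 * k + 1)) t ≤ idealOfVars _ K ^ (2 * t) :=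
      graphIdealSymbolicPower_le_idealOfVars_pow isBipartite_induce_compl_singleton_cycleGraph
        (by rw [ZMod.card]; lia)
    exact (le_inf le_rfl hdeg).trans (graphIdealSymbolicPower_inf_idealOfVars_pow_le hn)
  · obtain ⟨d, hd, hcolon⟩ := exists_colon_monomial_eq_idealOfVars (K := K) (by lia) ht
    refine ⟨(associatedPrimes_graphIdeal_pow_subset
      (graphIdealSymbolicPower_inf_idealOfVars_pow_le hn)).antisymm (Set.union_subset
        (minimalPrimes_subset_associatedPrimes_quotient_pow (by lia)) ?_), d, hd, ?_⟩
    · exact Set.singleton_subset_iff.2 (mem_associatedPrimes_quotient_iff.2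
        ⟨isMaximal_idealOfVars.isPrime, _, hcolon.symm⟩)
    · rw [Ideal.colon_span, hcolon]
end
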